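/- arXiv:1707.02081 — 5 statements merged into one kernel-verified Lean document; each statement's English description precedes it below -/
import Mathlib

section
/- Let C be a small addable class of finite simple graphs such that for every n ≥ 1 the set of connected graphs in C on the vertex set Fin n is nonempty, and let (H, r) be a rooted graph with H ∈ C and H connected. Then the probability that (H, r) appears in a graph drawn uniformly at random from the connected graphs in C on vertex set Fin n tends to 1 as n → ∞. -/
open Filter Topology FirstOrder

/-- A class of finite simple graphs, given as a property of simple graphs
on arbitrary finite vertex types. -/
abbrev GraphClassOn := ∀ (V : Type) [Finite V], SimpleGraph V → Prop

/-- The class is invariant under graph isomorphism. -/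
def ClassIsoInvariant (C : GraphClassOn) : Prop :=
  ∀ (V W : Type) [Finite V] [Finite W] (G : SimpleGraph V) (H : SimpleGraph W),
    Nonempty (G ≃g H) → (C V G ↔ C W H)

/-- The class is bridge-addable: one may add an edge between two vertices lying in
distinct connected components. -/
def ClassBridgeAddable (C : GraphClassOn) : Prop :=
  ∀ (V : Type) [Finite V] (G : SimpleGraph V) (u v : V),
    C V G → ¬G.Reachable u v → C V (G ⊔ SimpleGraph.fromEdgeSet {s(u, v)})

/-- The class is decomposable: a graph belongs to the class iff each of its connected
components does. -/
def ClassDecomposable (C : GraphClassOn) : Prop :=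
  ∀ (V : Type) [Finite V] (G : SimpleGraph V),
    C V G ↔ ∀ c : G.ConnectedComponent, C c.supp (G.induce c.supp)

/-- Addable = decomposable and bridge-addable. -/
def ClassAddable (C : GraphClassOn) : Prop :=
  ClassDecomposable C ∧ ClassBridgeAddable C

/-- The number of graphs in the class on the vertex set `Fin n`. -/
noncomputable def classCount (C : GraphClassOn) (n : ℕ) : ℕ :=
  Nat.card {G : SimpleGraph (Fin n) // C (Fin n) G}

/-- The class is small: `c_n ≤ d^n · n!` for some real `d`. -/
def ClassSmall (C : GraphClassOn) : Prop :=
  ∃ d : ℝ, ∀ n : ℕ, (classCount C n : ℝ) ≤ d ^ n * n.factorial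

/-- The class is smooth: `c_n / (n · c_{n-1})` tends to a finite limit. -/
def ClassSmooth (C : GraphClassOn) : Prop :=
  ∃ γ : ℝ, Tendsto (fun n : ℕ => (classCount C n : ℝ) / (n * classCount C (n - 1)))
    atTop (𝓝 γ)

/-- The probability that a uniformly random graph from the class on `Fin n`
satisfies the property `P`. -/
noncomputable def classProb (C : GraphClassOn) (n : ℕ) (P : SimpleGraph (Fin n) → Prop) : ℝ :=
  (Nat.card {G : SimpleGraph (Fin n) // C (Fin n) G ∧ P G} : ℝ) / (classCount C n : ℝ)

/-- The probability that a uniformly random *connected* graph from the class on `Fin n`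
satisfies the property `P`. -/
noncomputable def connClassProb (C : GraphClassOn) (n : ℕ)
    (P : SimpleGraph (Fin n) → Prop) : ℝ :=
  (Nat.card {G : SimpleGraph (Fin n) // (C (Fin n) G ∧ G.Connected) ∧ P G} : ℝ) /
    (Nat.card {G : SimpleGraph (Fin n) // C (Fin n) G ∧ G.Connected} : ℝ)

/-- Satisfaction of a first-order sentence in the language of graphs in a simple graph. -/
def SatFO {V : Type} (G : SimpleGraph V) (φ : Language.graph.Sentence) : Prop :=
  letI := G.structure
  V ⊨ φ

/-- The rooted graph `(H, r)` appears in `G` on the vertex set `W`: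
the induced subgraph of `G` on `W` is isomorphic to `H` via an isomorphism sending some
`w ∈ W` to `r`, every edge of `G` joining `W` to its complement is incident on `w`,
and there is exactly one such edge. -/
def AppearsAt {VH V : Type} (H : SimpleGraph VH) (r : VH) (G : SimpleGraph V)
    (W : Set V) : Prop :=
  ∃ (w : V) (hw : w ∈ W) (e : G.induce W ≃g H),
    e ⟨w, hw⟩ = r ∧
    (∀ a ∈ W, ∀ b ∉ W, G.Adj a b → a = w) ∧
    (∃! b, b ∉ W ∧ G.Adj w b)

/-- The rooted graph `(H, r)` appears in `G`. -/
def Appears {VH V : Type} (H : SimpleGraph VH) (r : VH) (G : SimpleGraph V) : Prop :=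
  ∃ W : Set V, AppearsAt H r G W

/-- The number of appearances of the rooted graph `(H, r)` in `G`, i.e. the number of
vertex sets `W` witnessing an appearance. -/
noncomputable def numAppearances {VH V : Type} (H : SimpleGraph VH) (r : VH)
    (G : SimpleGraph V) : ℕ :=
  Nat.card {W : Set V // AppearsAt H r G W}

/-- The number of connected components of `G` whose induced subgraph is isomorphic
to `H`. -/
noncomputable def numComponentsIso {V VH : Type} (G : SimpleGraph V)
    (H : SimpleGraph VH) : ℕ :=
  Nat.card {c : G.ConnectedComponent // Nonempty (G.induce c.supp ≃g H)}


section Helpers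

lemma crossing {V : Type*} {G : SimpleGraph V} (hG : G.Connected) (S : Set V) {a b : V}
    (ha : a ∈ S) (hb : b ∉ S) : ∃ x y, x ∈ S ∧ y ∉ S ∧ G.Adj x y := by
  obtain ⟨p⟩ := hG.preconnected a b
  obtain ⟨d, -, h1, h2⟩ := p.exists_boundary_dart S ha hb
  exact ⟨_, _, h1, h2, d.adj⟩

lemma crossing_induce {V : Type*} {G : SimpleGraph V} {U : Set V} (hG : (G.induce U).Connected)
    (S : Set V) {a b : V} (ha : a ∈ S) (haU : a ∈ U) (hb : b ∉ S) (hbU : b ∈ U) :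
    ∃ x y, x ∈ S ∧ y ∉ S ∧ x ∈ U ∧ y ∈ U ∧ G.Adj x y := by
  obtain ⟨x, y, hx, hy, h⟩ := crossing hG (Subtype.val ⁻¹' S) (a := ⟨a, haU⟩) (b := ⟨b, hbU⟩) ha hb
  exact ⟨x, y, hx, hy, x.2, y.2, h⟩

lemma AppearsAt.preimage {VH V V' : Type} {H : SimpleGraph VH} {r : VH} {G : SimpleGraph V}
    {G' : SimpleGraph V'} (f : G ↪g G') {W : Set V'} (h : AppearsAt H r G' W)
    (hW : W ⊆ Set.range f) (hW' : ∀ a ∈ W, ∀ b, G'.Adj a b → b ∈ Set.range f) :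
    AppearsAt H r G (f ⁻¹' W) := by
  obtain ⟨w, hw, e, her, h1, b, ⟨hb, hwb⟩, hbu⟩ := h
  obtain ⟨w, rfl⟩ := hW hw
  obtain ⟨b, rfl⟩ := hW' _ hw _ hwb
  let e0 : G.induce (f ⁻¹' W) ≃g G'.induce W :=
    { toEquiv := Equiv.ofBijective (fun x => ⟨f x.1, x.2⟩) (by
        constructor
        · intro x y hxy
          apply Subtype.ext
          exact f.injective (congrArg Subtype.val hxy)
        · rintro ⟨y, hy⟩
          obtain ⟨x, rfl⟩ := hW hy
          exact ⟨⟨x, hy⟩, rfl⟩)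
      map_rel_iff' := by
        intro a b
        exact f.map_adj_iff }
  refine ⟨w, hw, e0.trans e, her, ?_, b, ⟨hb, f.map_adj_iff.1 hwb⟩, ?_⟩
  · intro a ha b hb hab
    exact f.injective (h1 _ ha _ hb (f.map_adj_iff.2 hab))
  · rintro y ⟨hy, hy'⟩
    exact f.injective (hbu _ ⟨hy, f.map_adj_iff.2 hy'⟩)

lemma AppearsAt.iso {VH V V' : Type} {H : SimpleGraph VH} {r : VH} {G : SimpleGraph V}
    {G' : SimpleGraph V'} (f : G ≃g G') {W : Set V'} (h : AppearsAt H r G' W) :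
    AppearsAt H r G (f ⁻¹' W) :=
  h.preimage f.toEmbedding (fun x _ => f.surjective x) (fun _ _ b _ => f.surjective b)

lemma numAppearances_le_of_iso {VH V V' : Type} [Finite V] {H : SimpleGraph VH} {r : VH}
    {G : SimpleGraph V} {G' : SimpleGraph V'} (f : G ≃g G') :
    numAppearances H r G' ≤ numAppearances H r G := by
  refine Nat.card_le_card_of_injective
    (fun W : {W : Set V' // AppearsAt H r G' W} =>
      (⟨f ⁻¹' W.1, W.2.iso f⟩ : {W : Set V // AppearsAt H r G W})) ?_
  intro W W' h
  exact Subtype.ext (f.surjective.preimage_injective (congrArg Subtype.val h))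

lemma numAppearances_iso {VH V V' : Type} [Finite V] [Finite V'] {H : SimpleGraph VH} {r : VH}
    {G : SimpleGraph V} {G' : SimpleGraph V'} (f : G ≃g G') :
    numAppearances H r G' = numAppearances H r G :=
  le_antisymm (numAppearances_le_of_iso f) (numAppearances_le_of_iso f.symm)

/-- Join two graphs by a single edge. -/
def glue {α β : Type} (G₁ : SimpleGraph α) (i : α) (G₂ : SimpleGraph β) (j : β) :
    SimpleGraph (α ⊕ β) :=
  SimpleGraph.sum G₁ G₂ ⊔ SimpleGraph.fromEdgeSet {s(Sum.inl i, Sum.inr j)}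

section glue
variable {α β : Type} {G₁ : SimpleGraph α} {i : α} {G₂ : SimpleGraph β} {j : β}

@[simp] lemma glue_inl_inl (a b : α) :
    (glue G₁ i G₂ j).Adj (Sum.inl a) (Sum.inl b) ↔ G₁.Adj a b := by
  simp [glue]
@[simp] lemma glue_inr_inr (a b : β) :
    (glue G₁ i G₂ j).Adj (Sum.inr a) (Sum.inr b) ↔ G₂.Adj a b := by
  simp [glue]
@[simp] lemma glue_inl_inr (a : α) (b : β) :
    (glue G₁ i G₂ j).Adj (Sum.inl a) (Sum.inr b) ↔ a = i ∧ b = j := by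
  simp [glue]
@[simp] lemma glue_inr_inl (a : α) (b : β) :
    (glue G₁ i G₂ j).Adj (Sum.inr b) (Sum.inl a) ↔ a = i ∧ b = j := by
  rw [SimpleGraph.adj_comm]; simp

/-- left embedding -/
def glueInl (G₁ : SimpleGraph α) (i : α) (G₂ : SimpleGraph β) (j : β) : G₁ ↪g glue G₁ i G₂ j :=
  ⟨⟨Sum.inl, Sum.inl_injective⟩, by intro a b; exact glue_inl_inl a b⟩
/-- right embedding -/
def glueInr (G₁ : SimpleGraph α) (i : α) (G₂ : SimpleGraph β) (j : β) : G₂ ↪g glue G₁ i G₂ j :=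
  ⟨⟨Sum.inr, Sum.inr_injective⟩, by intro a b; exact glue_inr_inr a b⟩

lemma glue_inj {G₁' : SimpleGraph α} {i' : α} {G₂' : SimpleGraph β} {j' : β}
    (h : glue G₁ i G₂ j = glue G₁' i' G₂' j') : G₁ = G₁' ∧ i = i' ∧ G₂ = G₂' ∧ j = j' := by
  have h1 : (glue G₁' i' G₂' j').Adj (Sum.inl i) (Sum.inr j) := by rw [← h]; simp
  rw [glue_inl_inr] at h1
  refine ⟨?_, h1.1, ?_, h1.2⟩
  · ext a b
    rw [← glue_inl_inl (i := i) (G₂ := G₂) (j := j), h, glue_inl_inl]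
  · ext a b
    rw [← glue_inr_inr (i := i) (G₁ := G₁) (j := j), h, glue_inr_inr]

lemma glue_connected (h₁ : G₁.Connected) (h₂ : G₂.Connected) : (glue G₁ i G₂ j).Connected := by
  rw [SimpleGraph.connected_iff_exists_forall_reachable]
  refine ⟨Sum.inl i, ?_⟩
  rintro (a | b)
  · exact (h₁.preconnected i a).map (glueInl G₁ i G₂ j).toHom
  · have h : (glue G₁ i G₂ j).Reachable (Sum.inl i) (Sum.inr j) :=
      SimpleGraph.Adj.reachable (by simp)
    exact h.trans ((h₂.preconnected j b).map (glueInr G₁ i G₂ j).toHom)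

/-- range iso -/
noncomputable def rangeIso {V V' : Type} {G : SimpleGraph V} {G' : SimpleGraph V'} (f : G ↪g G') :
    G ≃g G'.induce (Set.range f) :=
  { toEquiv := Equiv.ofInjective f f.injective
    map_rel_iff' := by intro a b; exact f.map_adj_iff }

lemma sum_not_reachable (a : α) (b : β) : ¬ (SimpleGraph.sum G₁ G₂).Reachable (Sum.inl a) (Sum.inr b) := by
  rintro ⟨p⟩
  obtain ⟨⟨⟨x, y⟩, hd⟩, -, h1, h2⟩ := p.exists_boundary_dart (Set.range Sum.inl) (by simp) (by simp)
  obtain ⟨x, rfl⟩ := h1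
  rcases y with y | y
  · exact h2 ⟨y, rfl⟩
  · simp at hd

lemma mem_of_set_eq {C : GraphClassOn} {V : Type} {G : SimpleGraph V} {s t : Set V} [Finite s]
    [Finite t] (h : s = t) (hC : C t (G.induce t)) : C s (G.induce s) := by
  subst h; exact hC

lemma glue_mem {C : GraphClassOn} (hIso : ClassIsoInvariant C) (hAdd : ClassAddable C)
    [Finite α] [Finite β] (h₁ : G₁.Connected) (h₂ : G₂.Connected) (hC₁ : C α G₁) (hC₂ : C β G₂) :
    C (α ⊕ β) (glue G₁ i G₂ j) := by
  refine hAdd.2 _ _ _ _ ?_ (sum_not_reachable i j)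
  rw [hAdd.1]
  intro c
  induction c using SimpleGraph.ConnectedComponent.ind with | _ v
  rcases v with a | b
  · have hs : ((SimpleGraph.sum G₁ G₂).connectedComponentMk (Sum.inl a)).supp =
        Set.range (SimpleGraph.Embedding.sumInl (G := G₁) (H := G₂)) := by
      ext x
      rw [SimpleGraph.ConnectedComponent.mem_supp_iff, SimpleGraph.ConnectedComponent.eq]
      rcases x with x | x
      · simp only [SimpleGraph.Embedding.sumInl_apply, Set.mem_range, Sum.inl.injEq, exists_eq, iff_true]
        exact (h₁.preconnected x a).map (SimpleGraph.Embedding.sumInl (G := G₁) (H := G₂)).toHom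
      · simp only [SimpleGraph.Embedding.sumInl_apply, Set.mem_range, reduceCtorEq, exists_false, iff_false]
        exact fun h => sum_not_reachable _ _ h.symm
    exact mem_of_set_eq hs ((hIso _ _ _ _ ⟨rangeIso _⟩).1 hC₁)
  · have hs : ((SimpleGraph.sum G₁ G₂).connectedComponentMk (Sum.inr b)).supp =
        Set.range (SimpleGraph.Embedding.sumInr (G := G₁) (H := G₂)) := by
      ext x
      rw [SimpleGraph.ConnectedComponent.mem_supp_iff, SimpleGraph.ConnectedComponent.eq]
      rcases x with x | x
      · simp only [SimpleGraph.Embedding.sumInr_apply, Set.mem_range, reduceCtorEq, exists_false, iff_false]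
        exact fun h => sum_not_reachable _ _ h
      · simp only [SimpleGraph.Embedding.sumInr_apply, Set.mem_range, Sum.inr.injEq, exists_eq, iff_true]
        exact (h₂.preconnected x b).map (SimpleGraph.Embedding.sumInr (G := G₁) (H := G₂)).toHom
    exact mem_of_set_eq hs ((hIso _ _ _ _ ⟨rangeIso _⟩).1 hC₂)

lemma glue_appears_self : AppearsAt G₁ i (glue G₁ i G₂ j) (Set.range Sum.inl) := by
  refine ⟨Sum.inl i, ⟨i, rfl⟩, (rangeIso (glueInl G₁ i G₂ j)).symm, ?_, ?_, Sum.inr j, ?_, ?_⟩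
  · exact (rangeIso (glueInl G₁ i G₂ j)).symm_apply_apply i
  · rintro _ ⟨a, rfl⟩ (b | b) hb hab
    · exact absurd ⟨b, rfl⟩ hb
    · simp at hab; rw [hab.1]
  · simp
  · rintro (b | b) ⟨hb, hab⟩
    · exact absurd ⟨b, rfl⟩ hb
    · simp at hab; rw [hab]

lemma glue_appears_cases [Finite α] [Finite β] (h₁ : G₁.Connected) (h₂ : G₂.Connected)
    (hcard : Nat.card α < Nat.card β) {W : Set (α ⊕ β)} (h : AppearsAt G₁ i (glue G₁ i G₂ j) W) :
    W = Set.range Sum.inl ∨ (W = Sum.inr '' (Sum.inr ⁻¹' W) ∧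
      AppearsAt G₁ i G₂ (Sum.inr ⁻¹' W)) := by
  have hW := h
  obtain ⟨w, hw, e, her, h1, b, ⟨hb, hwb⟩, hbu⟩ := h
  have hcardW : Nat.card W = Nat.card α := Nat.card_congr e.toEquiv
  have hWc : ((glue G₁ i G₂ j).induce W).Connected := e.symm.connected_iff.1 h₁
  -- some vertex on the right is not in W
  have hz : ∃ z : β, Sum.inr z ∉ W := by
    by_contra! hz
    have := Nat.card_le_card_of_injective (β := ↑W) (fun z : β => (⟨Sum.inr z, hz z⟩ : ↑W))
      (fun x y hxy => Sum.inr_injective (congrArg Subtype.val hxy))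
    omega
  obtain ⟨z, hz⟩ := hz
  -- if `inr y ∈ W`, there is a crossing edge on the right so `w` is on the right
  have hright : ∀ y : β, Sum.inr y ∈ W → (∃ y, w = Sum.inr y) ∧ ∃ y, b = Sum.inr y := by
    intro y hy
    obtain ⟨x, y, hx, hy, hxy⟩ := crossing h₂ (Sum.inr ⁻¹' W) (a := y) (b := z) hy hz
    have h3 : (glue G₁ i G₂ j).Adj (Sum.inr x) (Sum.inr y) := by simpa using hxy
    have h4 := h1 _ hx _ hy h3
    rw [h4] at h3
    exact ⟨⟨x, h4.symm⟩, y, (hbu _ ⟨hy, h3⟩).symm⟩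
  by_cases hmeet : ∃ x : α, Sum.inl x ∈ W
  · left
    obtain ⟨x, hx⟩ := hmeet
    have hle : W ⊆ Set.range Sum.inl := by
      rintro (y | y) hy
      · exact ⟨y, rfl⟩
      exfalso
      obtain ⟨⟨y1, rfl⟩, -⟩ := hright y hy
      have hall : ∀ x', Sum.inl x' ∈ W := by
        intro x'
        by_contra hx'
        obtain ⟨x1, x2, hx1, hx2, hxx⟩ := crossing h₁ (Sum.inl ⁻¹' W) (a := x) (b := x') hx hx'
        have := h1 _ hx1 _ hx2 (by simpa using hxx)
        simp at this
      have hlt : (Set.range (Sum.inl : α → α ⊕ β)).ncard < W.ncard := by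
        refine Set.ncard_lt_ncard ⟨?_, fun hh => ?_⟩ (Set.toFinite _)
        · rintro _ ⟨a, rfl⟩; exact hall a
        · obtain ⟨a, ha⟩ := hh hy
          simp at ha
      rw [← Nat.card_coe_set_eq, ← Nat.card_coe_set_eq, hcardW,
        Nat.card_congr (Equiv.ofInjective (Sum.inl : α → α ⊕ β) Sum.inl_injective).symm] at hlt
      exact lt_irrefl _ hlt
    refine Set.eq_of_subset_of_ncard_le hle ?_ (Set.toFinite _)
    rw [← Nat.card_coe_set_eq, ← Nat.card_coe_set_eq, hcardW,
      Nat.card_congr (Equiv.ofInjective (Sum.inl : α → α ⊕ β) Sum.inl_injective).symm]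
  · right
    push Not at hmeet
    have hle : W ⊆ Set.range Sum.inr := by
      rintro (y | y) hy
      · exact absurd hy (hmeet y)
      · exact ⟨y, rfl⟩
    refine ⟨(Set.image_preimage_eq_of_subset hle).symm, ?_⟩
    refine hW.preimage (glueInr G₁ i G₂ j) hle ?_
    rintro a ha (c | c) hac
    · exfalso
      obtain ⟨y, rfl⟩ := hle ha
      have := h1 _ ha _ (hmeet c) hac
      rw [this] at hac
      have hc := hbu _ ⟨hmeet c, hac⟩
      obtain ⟨-, y', hy'⟩ := hright y ha
      rw [hy'] at hc
      simp at hc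
    · exact ⟨c, rfl⟩

lemma glue_numAppearances [Finite α] [Finite β] (h₁ : G₁.Connected) (h₂ : G₂.Connected)
    (hcard : Nat.card α < Nat.card β) :
    numAppearances G₁ i (glue G₁ i G₂ j) ≤ numAppearances G₁ i G₂ + 1 := by
  have hsub : {W | AppearsAt G₁ i (glue G₁ i G₂ j) W} ⊆
      insert (Set.range Sum.inl) (Set.image Sum.inr '' {W | AppearsAt G₁ i G₂ W}) := by
    intro W hW
    rcases glue_appears_cases h₁ h₂ hcard hW with h | ⟨h, h'⟩
    · exact Or.inl h
    · exact Or.inr ⟨_, h', h.symm⟩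
  calc numAppearances G₁ i (glue G₁ i G₂ j)
      = {W | AppearsAt G₁ i (glue G₁ i G₂ j) W}.ncard := Nat.card_coe_set_eq _
    _ ≤ _ := Set.ncard_le_ncard hsub (Set.toFinite _)
    _ ≤ _ := Set.ncard_insert_le _ _
    _ ≤ {W | AppearsAt G₁ i G₂ W}.ncard + 1 := by
      gcongr; exact Set.ncard_image_le (Set.toFinite _)
    _ = _ := by rw [← Nat.card_coe_set_eq]; rfl

end glue

lemma count_glue {α β : Type} [Finite α] [Finite β] {T : Type} [Finite T]
    (gl : T → SimpleGraph (α ⊕ β)) (hinj : Function.Injective gl)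
    (Y : Set (SimpleGraph (α ⊕ β))) (cuts : SimpleGraph (α ⊕ β) → Set (Set (α ⊕ β))) (K : ℕ)
    (hK : ∀ G ∈ Y, (cuts G).ncard ≤ K)
    (h : ∀ (σ : Equiv.Perm (α ⊕ β)) t, (gl t).comap σ ∈ Y ∧
      σ ⁻¹' (Set.range Sum.inl) ∈ cuts ((gl t).comap σ)) :
    (Nat.card α + Nat.card β).factorial * Nat.card T ≤
      ((Nat.card α).factorial * (Nat.card β).factorial) * (K * Nat.card Y) := by
  classical
  have := Fintype.ofFinite α
  have := Fintype.ofFinite β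
  have := Fintype.ofFinite T
  have key := Finset.card_le_mul_card_image_of_maps_to
    (s := (Finset.univ : Finset (Equiv.Perm (α ⊕ β) × T)))
    (t := (Y.toFinset).sigma (fun G => (cuts G).toFinset))
    (f := fun p => (⟨(gl p.2).comap p.1, p.1 ⁻¹' (Set.range Sum.inl)⟩ :
      Σ _ : SimpleGraph (α ⊕ β), Set (α ⊕ β)))
    (by
      rintro ⟨σ, t⟩ -
      simp only [Finset.mem_sigma, Set.mem_toFinset]
      exact h σ t)
    ((Nat.card α).factorial * (Nat.card β).factorial)
    (by
      rintro ⟨G', U⟩ -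
      rcases Finset.eq_empty_or_nonempty (Finset.univ.filter
        (fun p : Equiv.Perm (α ⊕ β) × T => (⟨(gl p.2).comap p.1, p.1 ⁻¹' (Set.range Sum.inl)⟩ :
          Σ _ : SimpleGraph (α ⊕ β), Set (α ⊕ β)) = ⟨G', U⟩)) with he | ⟨⟨σ0, t0⟩, h0⟩
      · rw [he]; simp
      simp only [Finset.mem_filter, Finset.mem_univ, true_and, Sigma.mk.injEq, heq_eq_eq] at h0
      have hc : (Finset.univ.filter
          (fun τ => τ ∈ (Equiv.Perm.sumCongrHom α β).range)).card =
          (Nat.card α).factorial * (Nat.card β).factorial := by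
        rw [← Fintype.card_subtype]
        rw [Nat.card_eq_fintype_card, Nat.card_eq_fintype_card, ← Fintype.card_perm,
          ← Fintype.card_perm, ← Fintype.card_prod]
        exact Equiv.Perm.sumCongrHom.card_range
      rw [← hc]
      refine Finset.card_le_card_of_injOn (fun p => p.1 * σ0⁻¹) ?_ ?_
      · rintro ⟨σ, t⟩ hp
        simp only [Finset.coe_filter, Finset.mem_univ, true_and, Sigma.mk.injEq, heq_eq_eq,
          Set.mem_ofPred_eq] at hp
        simp only [Finset.coe_filter, Finset.mem_univ, true_and, Set.mem_ofPred_eq]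
        refine Equiv.Perm.mem_sumCongrHom_range_of_perm_mapsTo_inl ?_
        intro x hx
        have hx' : σ0⁻¹ x ∈ U := by
          rw [← h0.2]
          simpa using hx
        rw [← hp.2] at hx'
        exact hx'
      · rintro ⟨σ, t⟩ hp ⟨σ', t'⟩ hp' heq
        simp only [Finset.coe_filter, Finset.mem_univ, true_and, Sigma.mk.injEq, heq_eq_eq,
          Set.mem_ofPred_eq] at hp hp'
        have hσ : σ = σ' := mul_right_cancel heq
        subst hσ
        have ht : gl t = gl t' := by
          have h1 := hp.1.trans hp'.1.symm
          ext a b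
          have h2 := congrArg (fun G : SimpleGraph (α ⊕ β) => G.Adj (σ.symm a) (σ.symm b)) h1
          simpa using h2
        rw [hinj ht])
  rw [Finset.card_univ, Fintype.card_prod, Fintype.card_perm, Fintype.card_sum,
    Finset.card_sigma] at key
  rw [Nat.card_eq_fintype_card (α := T)]
  have h1 : ∑ G ∈ Y.toFinset, (cuts G).toFinset.card ≤ K * Nat.card Y := by
    calc _ ≤ ∑ G ∈ Y.toFinset, K := by
          refine Finset.sum_le_sum fun G hG => ?_
          rw [← Set.ncard_eq_toFinset_card']
          exact hK G (by simpa using hG)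
      _ = _ := by
          rw [Finset.sum_const, smul_eq_mul, mul_comm, Nat.card_coe_set_eq,
            Set.ncard_eq_toFinset_card']
  refine le_trans ?_ (Nat.mul_le_mul_left _ h1)
  rw [Nat.card_eq_fintype_card, Nat.card_eq_fintype_card] at *
  exact key

/-- Number of connected graphs in the class on a vertex type. -/
noncomputable def cc (C : GraphClassOn) (V : Type) [Finite V] : ℕ :=
  Nat.card {G : SimpleGraph V // C V G ∧ G.Connected}

/-- Number of connected graphs in the class with at most `j` appearances. -/
noncomputable def cb (C : GraphClassOn) {VH : Type} (H : SimpleGraph VH) (r : VH) (j : ℕ)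
    (V : Type) [Finite V] : ℕ :=
  Nat.card {G : SimpleGraph V // (C V G ∧ G.Connected) ∧ numAppearances H r G ≤ j}

lemma cc_congr {C : GraphClassOn} (hIso : ClassIsoInvariant C) {V V' : Type} [Finite V] [Finite V']
    (e : V ≃ V') : cc C V ≤ cc C V' := by
  refine Nat.card_le_card_of_injective (fun G => (⟨G.1.comap e.symm, ?_, ?_⟩ :
    {G : SimpleGraph V' // C V' G ∧ G.Connected})) ?_
  · exact (hIso _ _ _ _ ⟨SimpleGraph.Iso.comap e.symm G.1⟩).2 G.2.1
  · exact (SimpleGraph.Iso.comap e.symm G.1).connected_iff.2 G.2.2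
  · intro G G' h
    apply Subtype.ext
    have h1 := congrArg Subtype.val h
    ext a b
    have h2 := congrArg (fun G : SimpleGraph V' => G.Adj (e a) (e b)) h1
    simpa using h2

lemma cb_congr {C : GraphClassOn} (hIso : ClassIsoInvariant C) {VH : Type} (H : SimpleGraph VH)
    (r : VH) (j : ℕ) {V V' : Type} [Finite V] [Finite V']
    (e : V ≃ V') : cb C H r j V ≤ cb C H r j V' := by
  refine Nat.card_le_card_of_injective (fun G => (⟨G.1.comap e.symm, ⟨?_, ?_⟩, ?_⟩ :
    {G : SimpleGraph V' // (C V' G ∧ G.Connected) ∧ numAppearances H r G ≤ j})) ?_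
  · exact (hIso _ _ _ _ ⟨SimpleGraph.Iso.comap e.symm G.1⟩).2 G.2.1.1
  · exact (SimpleGraph.Iso.comap e.symm G.1).connected_iff.2 G.2.1.2
  · rw [← numAppearances_iso (SimpleGraph.Iso.comap e.symm G.1)]; exact G.2.2
  · intro G G' h
    apply Subtype.ext
    have h1 := congrArg Subtype.val h
    ext a b
    have h2 := congrArg (fun G : SimpleGraph V' => G.Adj (e a) (e b)) h1
    simpa using h2

/-- one-edge cuts with connected inside -/
def IsCut {V : Type} (G : SimpleGraph V) (U : Set V) : Prop :=
  (G.induce U).Connected ∧ ∃ a b, a ∈ U ∧ b ∉ U ∧ ∀ x ∈ U, ∀ y ∉ U, G.Adj x y → x = a ∧ y = b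

lemma card_cuts {V : Type} [Finite V] {G : SimpleGraph V} (hG : G.Connected) :
    {U | IsCut G U}.ncard ≤ 2 * Nat.card V := by
  classical
  have := Fintype.ofFinite V
  have := hG.nonempty
  obtain ⟨T, hT, hTree⟩ := hG.exists_isTree_le
  choose! a b ha hb hab using fun (U : Set V) (hU : IsCut G U) => hU.2
  have hadj : ∀ U, IsCut G U → T.Adj (a U) (b U) := by
    intro U hU
    obtain ⟨x, y, hx, hy, hxy⟩ := crossing hTree.connected U (ha U hU) (hb U hU)
    obtain ⟨rfl, rfl⟩ := hab U hU x hx y hy (hT hxy)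
    exact hxy
  have hsub : ∀ U U', IsCut G U → IsCut G U' → a U = a U' → b U = b U' → U ⊆ U' := by
    intro U U' hU hU' h1 h2 z hz
    by_contra hz'
    obtain ⟨x, y, hx, hy, hxU, hyU, hxy⟩ := crossing_induce hU.1 U' (a := a U) (b := z)
      (h1 ▸ ha U' hU') (ha U hU) hz' hz
    obtain ⟨rfl, rfl⟩ := hab U' hU' x hx y hy hxy
    rw [← h2] at hyU
    exact hb U hU hyU
  have h1 : {U | IsCut G U}.ncard ≤ Nat.card T.Dart := by
    rw [← Nat.card_coe_set_eq]
    refine Nat.card_le_card_of_injective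
      (fun U : {U | IsCut G U} => (⟨(a U, b U), hadj U U.2⟩ : T.Dart)) ?_
    intro U U' h
    have h' := congrArg SimpleGraph.Dart.toProd h
    have h1 := congrArg Prod.fst h'
    have h2 := congrArg Prod.snd h'
    exact Subtype.ext (Set.Subset.antisymm (hsub _ _ U.2 U'.2 h1 h2)
      (hsub _ _ U'.2 U.2 h1.symm h2.symm))
  rw [Nat.card_eq_fintype_card, T.dart_card_eq_twice_card_edges] at h1
  have := hTree.card_edgeFinset
  rw [Nat.card_eq_fintype_card]
  omega

lemma super_mult {C : GraphClassOn} (hIso : ClassIsoInvariant C) (hAdd : ClassAddable C) (k l : ℕ) :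
    (k + l).factorial * ((cc C (Fin k) * k) * (cc C (Fin l) * l)) ≤
      (k.factorial * l.factorial) * (2 * (k + l) * cc C (Fin (k + l))) := by
  have key := count_glue (α := Fin k) (β := Fin l)
    (T := ({G : SimpleGraph (Fin k) // C (Fin k) G ∧ G.Connected} × Fin k) ×
      ({G : SimpleGraph (Fin l) // C (Fin l) G ∧ G.Connected} × Fin l))
    (fun t => glue t.1.1.1 t.1.2 t.2.1.1 t.2.2)
    (by
      rintro ⟨⟨⟨G, hG⟩, i⟩, ⟨⟨G', hG'⟩, i'⟩⟩ ⟨⟨⟨K, hK⟩, j⟩, ⟨⟨K', hK'⟩, j'⟩⟩ h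
      obtain ⟨h1, h2, h3, h4⟩ := glue_inj h
      simp only at h1 h2 h3 h4
      subst h1 h2 h3 h4
      rfl)
    {G | C _ G ∧ G.Connected} (fun G => {U | IsCut G U}) (2 * (k + l))
    (by
      intro G hG
      have := card_cuts hG.2
      simpa using this)
    (by
      rintro σ ⟨⟨⟨G, hG⟩, i⟩, ⟨⟨G', hG'⟩, i'⟩⟩
      refine ⟨⟨?_, ?_⟩, ?_, ?_⟩
      · exact (hIso _ _ _ _ ⟨SimpleGraph.Iso.comap σ _⟩).2 (glue_mem hIso hAdd hG.2 hG'.2 hG.1 hG'.1)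
      · exact (SimpleGraph.Iso.comap σ _).connected_iff.2 (glue_connected hG.2 hG'.2)
      · obtain ⟨w, hw, e, -⟩ := (glue_appears_self (G₁ := G) (i := i) (G₂ := G') (j := i')).iso
          (SimpleGraph.Iso.comap σ _)
        exact e.connected_iff.2 hG.2
      · refine ⟨σ.symm (Sum.inl i), σ.symm (Sum.inr i'), by simp, by simp, ?_⟩
        intro x hx y hy hxy
        rw [SimpleGraph.comap_adj] at hxy
        obtain ⟨u, hu⟩ := hx
        rw [Equiv.eq_symm_apply, Equiv.eq_symm_apply]
        rcases hy' : σ y with v | v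
        · exact absurd ⟨v, hy'.symm⟩ hy
        · rw [← hu, hy'] at hxy
          rw [← hu]
          simp at hxy
          simp [hxy.1, hxy.2])
  have h2 : cc C (Fin k ⊕ Fin l) ≤ cc C (Fin (k + l)) := cc_congr hIso finSumFinEquiv
  simp only [Nat.card_prod, Nat.card_eq_fintype_card (α := Fin _), Fintype.card_fin] at key
  exact key.trans (by gcongr; exact h2)

lemma pendant {C : GraphClassOn} (hIso : ClassIsoInvariant C) (hAdd : ClassAddable C)
    {VH : Type} [Finite VH] (H : SimpleGraph VH) (r : VH) (hH : C VH H) (hHc : H.Connected)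
    (n j : ℕ) (hn : Nat.card VH < n) :
    (Nat.card VH + n).factorial * (cb C H r j (Fin n) * n) ≤
      ((Nat.card VH).factorial * n.factorial) *
        ((j + 1) * cb C H r (j + 1) (Fin (Nat.card VH + n))) := by
  have key := count_glue (α := VH) (β := Fin n)
    (T := {G : SimpleGraph (Fin n) // (C (Fin n) G ∧ G.Connected) ∧ numAppearances H r G ≤ j}
      × Fin n)
    (fun t => glue H r t.1.1 t.2)
    (by
      rintro ⟨⟨G', hG'⟩, i'⟩ ⟨⟨K', hK'⟩, j'⟩ h
      obtain ⟨h1, h2, h3, h4⟩ := glue_inj h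
      simp only at h1 h2 h3 h4
      subst h3 h4
      rfl)
    {G | (C _ G ∧ G.Connected) ∧ numAppearances H r G ≤ j + 1}
    (fun G => {U | AppearsAt H r G U}) (j + 1)
    (by
      intro G hG
      have := hG.2
      rw [← Nat.card_coe_set_eq]
      exact this)
    (by
      rintro σ ⟨⟨G', hG'⟩, i'⟩
      refine ⟨⟨⟨?_, ?_⟩, ?_⟩, ?_⟩
      · exact (hIso _ _ _ _ ⟨SimpleGraph.Iso.comap σ _⟩).2
          (glue_mem hIso hAdd hHc hG'.1.2 hH hG'.1.1)
      · exact (SimpleGraph.Iso.comap σ _).connected_iff.2 (glue_connected hHc hG'.1.2)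
      · rw [← numAppearances_iso (SimpleGraph.Iso.comap σ _)]
        refine (glue_numAppearances hHc hG'.1.2 (by simpa using hn)).trans ?_
        have := hG'.2
        omega
      · exact glue_appears_self.iso (SimpleGraph.Iso.comap σ _))
  have h2 : cb C H r (j + 1) (VH ⊕ Fin n) ≤ cb C H r (j + 1) (Fin (Nat.card VH + n)) :=
    cb_congr hIso H r _ (((Finite.equivFin VH).sumCongr (Equiv.refl _)).trans finSumFinEquiv)
  simp only [Nat.card_prod, Nat.card_eq_fintype_card (α := Fin _), Fintype.card_fin] at key
  exact key.trans (by gcongr; exact h2)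

lemma analytic (a : ℕ → ℕ) (b : ℕ → ℕ → ℕ) (h : ℕ) (d : ℝ) (ha : ∀ n, 1 ≤ n → 1 ≤ a n)
    (hs : ∀ n, (a n : ℝ) ≤ d ^ n * n.factorial)
    (hsm : ∀ k l, (k + l).factorial * ((a k * k) * (a l * l)) ≤
      (k.factorial * l.factorial) * (2 * (k + l) * a (k + l)))
    (hba : ∀ j n, b j n ≤ a n)
    (hp : ∀ n j, h < n → (h + n).factorial * (b j n * n) ≤
      (h.factorial * n.factorial) * ((j + 1) * b (j + 1) (h + n))) :
    Tendsto (fun n => (b 0 n : ℝ) / a n) atTop (𝓝 0) := by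
  have hfac : ∀ n : ℕ, (0 : ℝ) < n.factorial := fun n => by exact_mod_cast n.factorial_pos
  set g : ℕ → ℝ := fun n => n * a n / n.factorial with hg
  have hgpos : ∀ n, 1 ≤ n → 0 < g n := by
    intro n hn
    have h1 : (0 : ℝ) < n := by exact_mod_cast hn
    have h2 : (0 : ℝ) < a n := by exact_mod_cast ha n hn
    have := hfac n
    simp only [hg]; positivity
  have hgsm : ∀ k l, g k * g l ≤ 2 * g (k + l) := by
    intro k l
    have h1 : ((k + l).factorial : ℝ) * ((a k * k) * (a l * l)) ≤
      (k.factorial * l.factorial) * (2 * ((k : ℝ) + l) * a (k + l)) := by exact_mod_cast hsm k l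
    have h2 := hfac k
    have h3 := hfac l
    have h4 := hfac (k + l)
    simp only [hg]
    rw [div_mul_div_comm, ← mul_div_assoc, div_le_div_iff₀ (by positivity) (by positivity)]
    push_cast
    linarith
  set u : ℕ → ℝ := fun n => - Real.log (g n / 2) with hu
  have hu0 : u 0 = 0 := by simp [hu, hg]
  have hsub : Subadditive u := by
    intro k l
    rcases Nat.eq_zero_or_pos k with rfl | hk
    · simp [hu0]
    rcases Nat.eq_zero_or_pos l with rfl | hl
    · simp [hu0]
    have h1 := hgpos k hk
    have h2 := hgpos l hl
    have h3 := hgpos (k + l) (by omega)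
    have h4 : Real.log (g k / 2 * (g l / 2)) ≤ Real.log (g (k + l) / 2) := by
      apply Real.log_le_log (by positivity)
      linarith [hgsm k l]
    rw [Real.log_mul (by positivity) (by positivity)] at h4
    simp only [hu]
    linarith
  have hd : 1 ≤ d := by
    have h1 := hs 1
    have h2 : (1 : ℝ) ≤ a 1 := by exact_mod_cast ha 1 le_rfl
    simp at h1
    linarith
  have hbdd : BddBelow (Set.range fun n : ℕ => u n / n) := by
    refine ⟨-(1 + Real.log d), ?_⟩
    rintro _ ⟨n, rfl⟩
    have hlogd : 0 ≤ Real.log d := Real.log_nonneg hd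
    rcases Nat.eq_zero_or_pos n with rfl | hn
    · simp [hu0]; linarith
    have hn' : (0 : ℝ) < n := by exact_mod_cast hn
    have h1 : g n / 2 ≤ n * d ^ n := by
      have h2 : g n ≤ n * d ^ n := by
        simp only [hg]
        rw [div_le_iff₀ (hfac n), mul_assoc]
        exact mul_le_mul_of_nonneg_left (hs n) hn'.le
      have := hgpos n hn
      linarith
    have h2 := Real.log_le_log (by have := hgpos n hn; positivity) h1
    rw [Real.log_mul (by positivity) (by positivity), Real.log_pow] at h2
    have h3 := Real.log_le_sub_one_of_pos hn'
    simp only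
    rw [le_div_iff₀ hn']
    simp only [hu]
    nlinarith
  set L := hsub.lim with hL
  have hLle : ∀ n, 1 ≤ n → g n ≤ 2 * Real.exp (-L * n) := by
    intro n hn
    have h1 := hsub.lim_le_div hbdd (n := n) (by omega)
    have hn' : (0 : ℝ) < n := by exact_mod_cast hn
    rw [le_div_iff₀ hn'] at h1
    have h2 : Real.log (g n / 2) ≤ -L * n := by simp only [hu] at h1; linarith
    have h3 := (Real.log_le_iff_le_exp (by have := hgpos n hn; positivity)).1 h2
    linarith
  set B : ℕ → ℕ → ℝ := fun j n => b j n / n.factorial with hB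
  have hBnn : ∀ j n, 0 ≤ B j n := fun j n => by simp only [hB]; positivity
  have hBp : ∀ n j, h < n → B j n * n ≤ h.factorial * (j + 1) * B (j + 1) (h + n) := by
    intro n j hn
    have h1 : ((h + n).factorial : ℝ) * (b j n * n) ≤
      (h.factorial * n.factorial) * (((j : ℝ) + 1) * b (j + 1) (h + n)) := by
      exact_mod_cast hp n j hn
    have h2 := hfac n
    have h4 := hfac (h + n)
    simp only [hB]
    rw [div_mul_eq_mul_div, ← mul_div_assoc, div_le_div_iff₀ (by positivity) (by positivity)]
    linarith
  have hiter : ∀ n m i : ℕ, h < n → i ≤ m →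
      B 0 n * (n : ℝ) ^ i ≤ (h.factorial * (m : ℝ)) ^ i * B i (h * i + n) := by
    intro n m i hn
    induction i with
    | zero => intro _; simp
    | succ i ih =>
      intro him
      have h1 := ih (by omega)
      have h2 := hBp (h * i + n) i (by omega)
      have h3 : h * (i + 1) + n = h + (h * i + n) := by ring
      have him' : ((i : ℝ) + 1) ≤ m := by exact_mod_cast him
      rw [h3]
      have hh := hfac h
      have hb0 := hBnn i (h * i + n)
      calc B 0 n * (n : ℝ) ^ (i + 1) = (B 0 n * (n : ℝ) ^ i) * n := by ring
        _ ≤ ((h.factorial * (m : ℝ)) ^ i * B i (h * i + n)) * ((h * i + n : ℕ) : ℝ) := by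
          refine mul_le_mul h1 ?_ (by positivity) (by positivity)
          push_cast
          have : (0 : ℝ) ≤ h * i := by positivity
          linarith
        _ = (h.factorial * (m : ℝ)) ^ i * (B i (h * i + n) * ((h * i + n : ℕ) : ℝ)) := by ring
        _ ≤ (h.factorial * (m : ℝ)) ^ i *
            (h.factorial * (i + 1) * B (i + 1) (h + (h * i + n))) := by gcongr
        _ ≤ (h.factorial * (m : ℝ)) ^ i *
            (h.factorial * m * B (i + 1) (h + (h * i + n))) := by
          have := hBnn (i + 1) (h + (h * i + n))
          gcongr
        _ = _ := by ring
  have hBle : ∀ j n, 1 ≤ n → B j n ≤ 2 * Real.exp (-L * n) := by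
    intro j n hn
    refine le_trans ?_ (hLle n hn)
    simp only [hB, hg]
    have := hfac n
    gcongr
    have h1 : (b j n : ℝ) ≤ a n := by exact_mod_cast hba j n
    have h2 : (1 : ℝ) ≤ n := by exact_mod_cast hn
    nlinarith [(Nat.cast_nonneg (a n) : (0 : ℝ) ≤ a n)]
  set K : ℝ := h.factorial * Real.exp (-L * h) with hK
  have hKpos : 0 < K := by have := hfac h; positivity
  obtain ⟨q, hq⟩ := exists_nat_ge (2 * K)
  have hqpos' : (0 : ℝ) < q := by linarith
  have hqpos : 0 < q := by exact_mod_cast hqpos'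
  have hmain : ∀ n, h < n → B 0 n ≤ 2 * Real.exp (-L * n) * (1 / 2) ^ (n / q) := by
    intro n hn
    set m := n / q with hm
    have hn' : (0 : ℝ) < n := by exact_mod_cast (by omega : 0 < n)
    have h1 := hiter n m m hn le_rfl
    have h2 := hBle m (h * m + n) (by omega)
    have hmq : (m : ℝ) * q ≤ n := by exact_mod_cast Nat.div_mul_le_self n q
    have hh := hfac h
    have h3 : B 0 n * (n : ℝ) ^ m ≤ (K * m) ^ m * (2 * Real.exp (-L * n)) := by
      calc _ ≤ _ := h1
        _ ≤ (h.factorial * (m : ℝ)) ^ m * (2 * Real.exp (-L * (h * m + n : ℕ))) := by gcongr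
        _ = (K * m) ^ m * (2 * Real.exp (-L * n)) := by
          have : Real.exp (-L * (h * m + n : ℕ)) = Real.exp (-L * h) ^ m * Real.exp (-L * n) := by
            rw [← Real.exp_nat_mul, ← Real.exp_add]
            congr 1
            push_cast; ring
          rw [this, hK]
          ring
    have h4 : (K * m) ^ m ≤ ((1 / 2) * n : ℝ) ^ m := by
      apply pow_le_pow_left₀ (by positivity)
      nlinarith [(Nat.cast_nonneg m : (0 : ℝ) ≤ m)]
    rw [mul_pow (1 / 2 : ℝ)] at h4
    have h5 : (0 : ℝ) < (n : ℝ) ^ m := by positivity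
    refine le_of_mul_le_mul_right (h3.trans ?_) h5
    calc (K * m) ^ m * (2 * Real.exp (-L * n)) ≤ ((1 / 2) ^ m * n ^ m) * (2 * Real.exp (-L * n)) := by
          gcongr
      _ = _ := by ring
  set ε : ℝ := Real.log 2 / (2 * q) with hε
  have hεpos : 0 < ε := by have := Real.log_pos one_lt_two; positivity
  have hev : ∀ᶠ n : ℕ in atTop, u n / n < L + ε :=
    (hsub.tendsto_lim hbdd).eventually (gt_mem_nhds (by linarith))
  have hlim : Tendsto (fun n : ℕ => 2 * ((n : ℝ) * Real.exp (-ε) ^ n)) atTop (𝓝 0) := by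
    have := (tendsto_self_mul_const_pow_of_lt_one (Real.exp_pos (-ε)).le
      (by rw [Real.exp_lt_one_iff]; linarith)).const_mul 2
    simpa using this
  refine squeeze_zero' (Eventually.of_forall fun n => by positivity) ?_ hlim
  filter_upwards [hev, eventually_gt_atTop h] with n hn1 hn2
  have hn' : (0 : ℝ) < n := by exact_mod_cast (by omega : 0 < n)
  have hapos : (0 : ℝ) < a n := by exact_mod_cast ha n (by omega)
  rw [div_lt_iff₀ hn'] at hn1
  have hgl : 2 * Real.exp (-(L + ε) * n) ≤ g n := by
    have h1 : -(L + ε) * n ≤ Real.log (g n / 2) := by simp only [hu] at hn1; linarith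
    have h2 := (Real.le_log_iff_exp_le (by have := hgpos n (by omega); positivity)).1 h1
    linarith
  have hhalf : ((1 : ℝ) / 2) ^ (n / q) ≤ 2 * Real.exp (-(2 * ε) * n) := by
    have h1 : (n : ℝ) ≤ q * ((n / q : ℕ) : ℝ) + q := by
      have := (Nat.lt_mul_div_succ n hqpos).le
      have h2 : (n : ℝ) ≤ (q : ℝ) * (((n / q : ℕ) : ℝ) + 1) := by exact_mod_cast this
      linarith
    have hl := Real.log_pos one_lt_two
    have h3 : ((1 : ℝ) / 2) ^ (n / q) = Real.exp (-(Real.log 2) * ((n / q : ℕ) : ℝ)) := by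
      rw [mul_comm, Real.exp_nat_mul, Real.exp_neg, Real.exp_log two_pos]; norm_num
    have h4 : 2 * Real.exp (-(2 * ε) * n) = Real.exp (Real.log 2 + -(2 * ε) * n) := by
      rw [Real.exp_add, Real.exp_log two_pos]
    rw [h3, h4, Real.exp_le_exp]
    have h5 : 2 * ε * q = Real.log 2 := by rw [hε]; field_simp
    have h6 : 2 * ε * n ≤ 2 * ε * (q * ((n / q : ℕ) : ℝ) + q) := by gcongr
    nlinarith
  have hm := hmain n hn2
  have hF := hfac n
  have hbB : (b 0 n : ℝ) = B 0 n * n.factorial := by simp only [hB]; field_simp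
  have hag : (a n : ℝ) * n = g n * n.factorial := by simp only [hg]; field_simp
  rw [div_le_iff₀ hapos, hbB]
  calc B 0 n * n.factorial
      ≤ (2 * Real.exp (-L * n) * (1 / 2) ^ (n / q)) * n.factorial := by gcongr
    _ ≤ (2 * Real.exp (-L * n) * (2 * Real.exp (-(2 * ε) * n))) * n.factorial := by gcongr
    _ = 2 * Real.exp (-ε) ^ n * ((2 * Real.exp (-(L + ε) * n)) * n.factorial) := by
      have : Real.exp (-L * n) * Real.exp (-(2 * ε) * n) =
          Real.exp (-ε) ^ n * Real.exp (-(L + ε) * n) := by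
        rw [← Real.exp_nat_mul, ← Real.exp_add, ← Real.exp_add]; congr 1; ring
      linear_combination (4 * (n.factorial : ℝ)) * this
    _ ≤ 2 * Real.exp (-ε) ^ n * (g n * n.factorial) := by gcongr
    _ = _ := by rw [← hag]; ring

end Helpers

/-- Every connected rooted graph from a small addable class appears in
the random *connected* graph from the class with probability tending to `1`. -/
theorem rooted_graph_appears_in_connected
    (C : GraphClassOn) (hIso : ClassIsoInvariant C) (hAdd : ClassAddable C)
    (hSmall : ClassSmall C)
    (hne : ∀ n : ℕ, 1 ≤ n → ∃ G : SimpleGraph (Fin n), C (Fin n) G ∧ G.Connected)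
    (VH : Type) [Finite VH] (H : SimpleGraph VH) (r : VH)
    (hH : C VH H) (hHconn : H.Connected) :
    Tendsto (fun n : ℕ => connClassProb C n (fun G => Appears H r G)) atTop (𝓝 1) := by
  obtain ⟨d, hd⟩ := hSmall
  have hpos : ∀ n, 1 ≤ n → 1 ≤ cc C (Fin n) := by
    intro n hn
    obtain ⟨G, hG⟩ := hne n hn
    have : Nonempty {G : SimpleGraph (Fin n) // C (Fin n) G ∧ G.Connected} := ⟨⟨G, hG⟩⟩
    exact Nat.card_pos
  have key := analytic (fun n => cc C (Fin n)) (fun j n => cb C H r j (Fin n)) (Nat.card VH) d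
    hpos
    (by
      intro n
      refine le_trans ?_ (hd n)
      have : cc C (Fin n) ≤ classCount C n :=
        Nat.card_le_card_of_injective (fun G => (⟨G.1, G.2.1⟩ :
          {G : SimpleGraph (Fin n) // C (Fin n) G}))
          (fun G G' h => Subtype.ext (Subtype.mk.inj h))
      exact_mod_cast this)
    (super_mult hIso hAdd)
    (by
      intro j n
      exact Nat.card_le_card_of_injective (fun G => (⟨G.1, G.2.1⟩ :
          {G : SimpleGraph (Fin n) // C (Fin n) G ∧ G.Connected}))
          (fun G G' h => Subtype.ext (Subtype.mk.inj h)))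
    (fun n j hn => pendant hIso hAdd H r hH hHconn n j hn)
  have h2 := key.const_sub 1
  rw [sub_zero] at h2
  refine h2.congr' ?_
  filter_upwards [eventually_ge_atTop 1] with n hn
  have hp : (0 : ℝ) < cc C (Fin n) := by exact_mod_cast hpos n hn
  have hsum : Nat.card {G : SimpleGraph (Fin n) // (C (Fin n) G ∧ G.Connected) ∧ Appears H r G} +
      cb C H r 0 (Fin n) = cc C (Fin n) := by
    have hset : {G : SimpleGraph (Fin n) | (C (Fin n) G ∧ G.Connected) ∧
          numAppearances H r G ≤ 0} = {G | C (Fin n) G ∧ G.Connected} \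
          {G | (C (Fin n) G ∧ G.Connected) ∧ Appears H r G} := by
      ext G
      have : numAppearances H r G ≤ 0 ↔ ¬ Appears H r G := by
        rw [Nat.le_zero, numAppearances, Finite.card_eq_zero_iff, isEmpty_subtype, Appears,
          not_exists]
      simp only [Set.mem_sdiff, Set.mem_ofPred_eq, this]
      tauto
    have h3 : cb C H r 0 (Fin n) = {G : SimpleGraph (Fin n) | (C (Fin n) G ∧ G.Connected) ∧
          numAppearances H r G ≤ 0}.ncard := Nat.card_coe_set_eq _
    have h4 : cc C (Fin n) = {G : SimpleGraph (Fin n) | C (Fin n) G ∧ G.Connected}.ncard :=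
      Nat.card_coe_set_eq _
    have h5 : Nat.card {G : SimpleGraph (Fin n) // (C (Fin n) G ∧ G.Connected) ∧ Appears H r G} =
      {G : SimpleGraph (Fin n) | (C (Fin n) G ∧ G.Connected) ∧ Appears H r G}.ncard :=
      Nat.card_coe_set_eq _
    rw [h3, h4, h5, hset, add_comm]
    exact Set.ncard_sdiff_add_ncard_of_subset (fun G hG => hG.1) (Set.toFinite _)
  have hsum' : (Nat.card {G : SimpleGraph (Fin n) //
      (C (Fin n) G ∧ G.Connected) ∧ Appears H r G} : ℝ) + cb C H r 0 (Fin n) = cc C (Fin n) := by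
    exact_mod_cast hsum
  show 1 - (cb C H r 0 (Fin n) : ℝ) / cc C (Fin n) = _ / (cc C (Fin n) : ℝ)
  rw [eq_div_iff hp.ne', sub_mul, div_mul_cancel₀ _ hp.ne']
  linarith
end

section
/- Let C be a smooth addable class of finite simple graphs with C_n nonempty for every n ≥ 1. For every ε > 0 there exists a constant g such that, for all sufficiently large n, with probability at least 1 − ε the uniformly random graph R_n(C) on vertex set Fin n has a connected component containing at least n − g vertices. -/
open Filter Topology FirstOrder

open Classical in
/-- The number of ordered pairs of vertices forming a bridge is at most `2n`. -/
lemma card_bridge_pairs_le (n : ℕ) (hn : 1 ≤ n) (G : SimpleGraph (Fin n)) :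
    (Finset.univ.filter (fun p : Fin n × Fin n => G.Adj p.1 p.2 ∧ G.IsBridge s(p.1, p.2))).card
      ≤ 2 * n := by
  have : Nonempty (Fin n) := ⟨⟨0, hn⟩⟩
  let H : SimpleGraph (Fin n) :=
    { Adj := fun u v => G.Adj u v ∧ G.IsBridge s(u, v)
      symm := ⟨fun u v h => ⟨h.1.symm, by rw [Sym2.eq_swap]; exact h.2⟩⟩
      loopless := ⟨fun u h => G.loopless.irrefl u h.1⟩ }
  have hle : H ≤ G := fun u v h => h.1
  have hac : H.IsAcyclic := by
    rw [SimpleGraph.isAcyclic_iff_forall_adj_isBridge]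
    intro u v h
    exact h.2.anti hle
  obtain ⟨T, hHT, -, hT⟩ :=
    (SimpleGraph.connected_top (V := Fin n)).exists_isTree_le_of_le_of_isAcyclic le_top hac
  have h1 := hT.card_edgeFinset
  have h2 := T.sum_degrees_eq_twice_card_edges
  have h3 : (Finset.univ.filter
      (fun p : Fin n × Fin n => G.Adj p.1 p.2 ∧ G.IsBridge s(p.1, p.2))).card
      ≤ ∑ u : Fin n, T.degree u := by
    have : ∑ u : Fin n, T.degree u
        = (Finset.univ.sigma (fun u : Fin n => T.neighborFinset u)).card := by
      rw [Finset.card_sigma]; rfl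
    rw [this]
    apply Finset.card_le_card_of_injOn (fun p => (⟨p.1, p.2⟩ : Σ _ : Fin n, Fin n))
    · intro p hp
      simp only [Finset.coe_filter, Finset.mem_univ, true_and, Set.mem_ofPred_eq] at hp
      simpa using hHT (show H.Adj p.1 p.2 from hp)
    · rintro ⟨a, b⟩ _ ⟨c, d⟩ _ h
      simpa using h
  rw [Fintype.card_fin] at h1
  omega

/-- Deleting a freshly added edge gives back the graph. -/
lemma add_delete_edge {V : Type} (G : SimpleGraph V) (u v : V) (h : ¬ G.Adj u v) :
    (G ⊔ SimpleGraph.fromEdgeSet {s(u, v)}).deleteEdges {s(u, v)} = G := by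
  ext a b
  simp only [SimpleGraph.deleteEdges_adj, SimpleGraph.sup_adj, SimpleGraph.fromEdgeSet_adj,
    Set.mem_singleton_iff]
  constructor
  · rintro ⟨h1 | h1, h2⟩
    · exact h1
    · exact absurd h1.1 h2
  · intro hab
    refine ⟨Or.inl hab, fun he => h ?_⟩
    rw [← SimpleGraph.mem_edgeSet] at hab ⊢
    rwa [← he]

open Classical in
/-- Double counting of addable edges against bridges. -/
lemma sum_cross_le (C : GraphClassOn) (hB : ClassBridgeAddable C) (n : ℕ) (hn : 1 ≤ n) :
    ∑ G ∈ Finset.univ.filter (fun G : SimpleGraph (Fin n) => C (Fin n) G),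
      (Finset.univ.filter (fun p : Fin n × Fin n => ¬ G.Reachable p.1 p.2)).card
      ≤ (Finset.univ.filter (fun G : SimpleGraph (Fin n) => C (Fin n) G)).card * (2 * n) := by
  calc _ ≤ ∑ G ∈ Finset.univ.filter (fun G : SimpleGraph (Fin n) => C (Fin n) G),
      (Finset.univ.filter
        (fun p : Fin n × Fin n => G.Adj p.1 p.2 ∧ G.IsBridge s(p.1, p.2))).card := by
        rw [← Finset.card_sigma, ← Finset.card_sigma]
        apply Finset.card_le_card_of_injOn
          (fun x : (Σ _ : SimpleGraph (Fin n), Fin n × Fin n) =>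
            (⟨x.1 ⊔ SimpleGraph.fromEdgeSet {s(x.2.1, x.2.2)}, x.2⟩ :
              Σ _ : SimpleGraph (Fin n), Fin n × Fin n))
        · rintro ⟨G, u, v⟩ hx
          simp only [Finset.coe_sigma, Set.mem_sigma_iff, Finset.coe_filter, Finset.mem_univ,
            true_and, Set.mem_ofPred_eq] at hx ⊢
          obtain ⟨hG, hr⟩ := hx
          refine ⟨hB _ G u v hG hr, ?_, ?_⟩
          · simp only [SimpleGraph.sup_adj, SimpleGraph.fromEdgeSet_adj, Set.mem_singleton_iff]
            exact Or.inr ⟨trivial, fun e => hr (e ▸ SimpleGraph.Reachable.refl _)⟩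
          · rw [SimpleGraph.isBridge_iff, add_delete_edge G u v (fun h => hr h.reachable)]
            exact hr
        · rintro ⟨G, u, v⟩ hx ⟨G', u', v'⟩ hy h
          simp only [Finset.coe_sigma, Set.mem_sigma_iff, Finset.coe_filter, Finset.mem_univ,
            true_and, Set.mem_ofPred_eq] at hx hy
          simp only [Sigma.mk.injEq, heq_eq_eq, Prod.mk.injEq] at h
          obtain ⟨h1, rfl, rfl⟩ := h
          have e := congrArg (fun K : SimpleGraph (Fin n) => K.deleteEdges {s(u, v)}) h1
          rw [add_delete_edge G u v (fun h => hx.2 h.reachable),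
            add_delete_edge G' u v (fun h => hy.2 h.reachable)] at e
          rw [e]
    _ ≤ _ := by
        rw [← smul_eq_mul]
        exact Finset.sum_le_card_nsmul _ _ _ (fun G _ => card_bridge_pairs_le n hn G)

open Classical in
/-- If all components are small then there are many non-reachable pairs. -/
lemma cross_ge (n g : ℕ) (G : SimpleGraph (Fin n))
    (h : ¬ ∃ c : G.ConnectedComponent, n - g ≤ Nat.card c.supp) :
    n * (g + 1) ≤
      (Finset.univ.filter (fun p : Fin n × Fin n => ¬ G.Reachable p.1 p.2)).card := by
  push Not at h
  have key : ∀ u : Fin n,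
      g + 1 ≤ (Finset.univ.filter (fun v : Fin n => ¬ G.Reachable u v)).card := by
    intro u
    have h1 := h (G.connectedComponentMk u)
    have h2 : Nat.card (G.connectedComponentMk u).supp
        = (Finset.univ.filter (fun v : Fin n => G.Reachable u v)).card := by
      rw [Nat.card_eq_fintype_card, Fintype.card_subtype]
      congr 1
      ext v
      simp [SimpleGraph.reachable_comm]
    have h3 := Finset.card_filter_add_card_filter_not (s := (Finset.univ : Finset (Fin n)))
      (fun v : Fin n => G.Reachable u v)
    rw [Finset.card_univ, Fintype.card_fin] at h3
    omega
  calc n * (g + 1) ≤ ∑ u : Fin n,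
        (Finset.univ.filter (fun v : Fin n => ¬ G.Reachable u v)).card := by
        simpa using Finset.card_nsmul_le_sum (Finset.univ : Finset (Fin n)) _ (g + 1)
          (fun u _ => key u)
    _ = _ := by
        rw [← Finset.card_sigma]
        apply Finset.card_bij (fun (x : Σ _ : Fin n, Fin n) _ => (x.1, x.2))
        · rintro ⟨a, b⟩ hx; simpa using hx
        · rintro ⟨a, b⟩ _ ⟨c, d⟩ _ h; simpa using h
        · rintro ⟨a, b⟩ hx; exact ⟨⟨a, b⟩, by simpa using hx, rfl⟩

/-- Random graphs from a smooth addable class have a giant component: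
for every `ε > 0` there is a constant `g` such that for all sufficiently large `n`, with
probability at least `1 - ε` the random graph has a connected component with at least
`n - g` vertices. -/
theorem giant_component
    (C : GraphClassOn) (hIso : ClassIsoInvariant C) (hAdd : ClassAddable C)
    (hSmooth : ClassSmooth C)
    (hne : ∀ n : ℕ, 1 ≤ n → ∃ G : SimpleGraph (Fin n), C (Fin n) G) :
    ∀ ε : ℝ, 0 < ε → ∃ g : ℕ, ∃ N : ℕ, ∀ n : ℕ, N ≤ n →
      1 - ε ≤ classProb C n
        (fun G => ∃ c : G.ConnectedComponent, n - g ≤ Nat.card c.supp) := by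
  classical
  intro ε hε
  obtain ⟨g, hg⟩ := exists_nat_gt (2 / ε)
  refine ⟨g, 1, fun n hn => ?_⟩
  set P : SimpleGraph (Fin n) → Prop :=
    fun G => ∃ c : G.ConnectedComponent, n - g ≤ Nat.card c.supp with hP
  set A := Finset.univ.filter (fun G : SimpleGraph (Fin n) => C (Fin n) G) with hA
  have hc : classCount C n = A.card := by
    rw [classCount, Nat.card_eq_fintype_card, Fintype.card_subtype]
  have hgood : Nat.card {G : SimpleGraph (Fin n) // C (Fin n) G ∧ P G} = (A.filter P).card := by
    rw [Nat.card_eq_fintype_card, Fintype.card_subtype, hA, Finset.filter_filter]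
  have hsplit := Finset.card_filter_add_card_filter_not (s := A) P
  have hpos : 0 < A.card := by
    obtain ⟨G, hG⟩ := hne n hn
    exact Finset.card_pos.mpr ⟨G, by simp [hA, hG]⟩
  have hbad : (A.filter (fun G => ¬ P G)).card * (n * (g + 1)) ≤ A.card * (2 * n) := by
    refine le_trans ?_ (sum_cross_le C hAdd.2 n hn)
    rw [← smul_eq_mul]
    refine le_trans (Finset.card_nsmul_le_sum _ _ _ (fun G hG => cross_ge n g G ?_))
      (Finset.sum_le_sum_of_subset (Finset.filter_subset (fun G => ¬ P G) A))
    exact (Finset.mem_filter.mp hG).2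
  have hbad' : (A.filter (fun G => ¬ P G)).card * (g + 1) ≤ A.card * 2 := by
    apply Nat.le_of_mul_le_mul_left _ hn
    calc _ = (A.filter (fun G => ¬ P G)).card * (n * (g + 1)) := by ring
      _ ≤ _ := hbad
      _ = _ := by ring
  have hA' : (0 : ℝ) < A.card := by exact_mod_cast hpos
  rw [classProb, hgood, hc, le_div_iff₀ hA']
  have e1 : ((A.filter P).card : ℝ) + (A.filter (fun G => ¬ P G)).card = A.card := by
    exact_mod_cast hsplit
  have e2 : ((A.filter (fun G => ¬ P G)).card : ℝ) * (g + 1) ≤ A.card * 2 := by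
    exact_mod_cast hbad'
  have e3 : 2 < g * ε := by rwa [div_lt_iff₀ hε] at hg
  have e4 : ((A.filter (fun G => ¬ P G)).card : ℝ) ≤ ε * A.card := by
    have hg1 : (0 : ℝ) < (g : ℝ) + 1 := by positivity
    refine le_of_mul_le_mul_right (e2.trans ?_) hg1
    nlinarith
  linarith
end

section
/- Let C be a smooth addable class of finite simple graphs with C_n nonempty for every n ≥ 1, let H be a finite connected simple graph, and let k ∈ ℕ. Then there is a real number p_k(H) such that the probability that the uniformly random graph R_n(C) on vertex set Fin n has exactly k connected components isomorphic to H tends to p_k(H) as n → ∞. -/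
open Filter Topology FirstOrder

theorem analytic_aux (P : ℕ → ℕ → ℝ) (h : ℕ) (hh : 1 ≤ h) (lam : ℕ → ℝ) (l : ℝ)
    (hl : Tendsto lam atTop (𝓝 l)) (hl0 : lam 0 = 0)
    (hP0 : ∀ n k, n < k → P n k = 0)
    (hP1 : ∀ n, ∑ k ∈ Finset.range (n + 1), P n k = 1)
    (hrec : ∀ n k : ℕ, ((k : ℝ) + 1) * P n (k + 1) = lam n * P (n - h) k) (k : ℕ) :
    ∃ p : ℝ, Tendsto (fun n => P n k) atTop (𝓝 p) := by
  obtain ⟨M, hM⟩ : ∃ M : ℝ, ∀ n, |lam n| ≤ M := by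
    obtain ⟨M, hM⟩ := (Metric.isBounded_range_of_tendsto lam hl).exists_norm_le
    exact ⟨M, fun n => hM _ ⟨n, rfl⟩⟩
  have hM0 : 0 ≤ M := (abs_nonneg _).trans (hM 0)
  set E : ℕ → ℕ → ℝ := fun n j => ∑ k ∈ Finset.range (n + 1), (k.choose j : ℝ) * P n k with hE
  have hE0 : ∀ n, E n 0 = 1 := by intro n; simp [hE, hP1]
  have hshift : Tendsto (fun n : ℕ => n - h) atTop atTop := tendsto_sub_atTop_nat h
  have hErec : ∀ n j : ℕ, ((j : ℝ) + 1) * E n (j + 1) = lam n * E (n - h) j := by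
    intro n j
    rcases Nat.eq_zero_or_pos n with rfl | hn
    · simp [hE, hl0]
    · simp only [hE]
      rw [Finset.sum_range_succ']
      have hsub : Finset.range (n - h + 1) ⊆ Finset.range n := by
        intro x hx; simp at *; omega
      rw [Finset.sum_subset hsub (fun x _ hx => by
        rw [hP0 (n - h) x (by simp at hx; omega), mul_zero])]
      simp only [Nat.choose_zero_succ, Nat.cast_zero, zero_mul, add_zero, Finset.mul_sum]
      refine Finset.sum_congr rfl fun x _ => ?_
      have h1 : ((x : ℝ) + 1) * (x.choose j) = ((x + 1).choose (j + 1)) * ((j : ℝ) + 1) := by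
        exact_mod_cast Nat.add_one_mul_choose_eq x j
      have h2 := hrec n x
      linear_combination (-P n (x + 1)) * h1 + (x.choose j : ℝ) * h2
  have hEb : ∀ j n, |E n j| ≤ M ^ j / (j.factorial : ℝ) := by
    intro j
    induction j with
    | zero => intro n; simp [hE0]
    | succ j ih =>
      intro n
      have hj : (0 : ℝ) < (j : ℝ) + 1 := by positivity
      have h1 : ((j : ℝ) + 1) * |E n (j + 1)| ≤ M * (M ^ j / (j.factorial : ℝ)) := by
        have h3 := congrArg abs (hErec n j)
        rw [abs_mul, abs_of_pos hj, abs_mul] at h3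
        rw [h3]
        exact mul_le_mul (hM n) (ih _) (abs_nonneg _) hM0
      rw [← le_div_iff₀' hj] at h1
      refine h1.trans (le_of_eq ?_)
      rw [Nat.factorial_succ]; push_cast
      field_simp
      ring
  have hEt : ∀ j, Tendsto (fun n => E n j) atTop (𝓝 (l ^ j / (j.factorial : ℝ))) := by
    intro j
    induction j with
    | zero => simp [hE0]
    | succ j ih =>
      have hj : (0 : ℝ) < (j : ℝ) + 1 := by positivity
      have : ∀ n, E n (j + 1) = lam n * E (n - h) j / ((j : ℝ) + 1) := by
        intro n; rw [← hErec]; field_simp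
      simp only [this]
      have h2 := (hl.mul (ih.comp hshift)).div_const ((j : ℝ) + 1)
      have h3 : l ^ (j + 1) / ((j + 1).factorial : ℝ) =
          l * (l ^ j / (j.factorial : ℝ)) / ((j : ℝ) + 1) := by
        rw [Nat.factorial_succ]; push_cast
        field_simp
        ring
      rw [h3]
      exact h2
  have hPE : ∀ n, P n 0 = ∑' j, (-1 : ℝ) ^ j * E n j := by
    intro n
    rw [tsum_eq_sum (s := Finset.range (n + 1))]
    · simp only [hE, Finset.mul_sum]
      rw [Finset.sum_comm]
      rw [Finset.sum_eq_single 0]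
      · rw [Finset.sum_eq_single 0]
        · simp
        · intro b _ hb
          obtain ⟨b, rfl⟩ := Nat.exists_eq_succ_of_ne_zero hb
          simp
        · simp
      · intro x hx hx0
        have h1 : ∑ j ∈ Finset.range (x + 1), (-1 : ℝ) ^ j * (x.choose j : ℝ) = 0 := by
          exact_mod_cast Int.alternating_sum_range_choose_of_ne hx0
        have h2 : ∑ j ∈ Finset.range (n + 1), (-1 : ℝ) ^ j * (x.choose j : ℝ) = 0 := by
          rw [← h1]
          symm
          apply Finset.sum_subset
          · intro y hy; simp at *; omega
          · intro y _ hy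
            rw [Nat.choose_eq_zero_of_lt (by simp at hy; omega)]; simp
        rw [← zero_mul (P n x), ← h2, Finset.sum_mul]
        exact Finset.sum_congr rfl fun j _ => by ring
      · simp
    · intro j hj
      have : E n j = 0 := by
        simp only [hE]
        apply Finset.sum_eq_zero
        intro x hx
        rw [Nat.choose_eq_zero_of_lt (by simp at hj hx; omega)]; simp
      simp [this]
  induction k with
  | zero =>
    refine ⟨∑' j, (-1 : ℝ) ^ j * (l ^ j / (j.factorial : ℝ)), ?_⟩
    simp only [hPE]
    refine tendsto_tsum_of_dominated_convergence (bound := fun j => M ^ j / (j.factorial : ℝ))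
      (Real.summable_pow_div_factorial M) (fun j => (hEt j).const_mul _) ?_
    refine Eventually.of_forall fun n j => ?_
    simpa using hEb j n
  | succ k ih =>
    obtain ⟨p, hp⟩ := ih
    refine ⟨l * p / ((k : ℝ) + 1), ?_⟩
    have hj : (0 : ℝ) < (k : ℝ) + 1 := by positivity
    have : ∀ n, P n (k + 1) = lam n * P (n - h) k / ((k : ℝ) + 1) := by
      intro n; rw [← hrec]; field_simp
    simp only [this]
    exact (hl.mul (hp.comp hshift)).div_const _

/-- convergence of the ratio. -/
theorem ratio_aux (c : ℕ → ℝ) (hc : ∀ n, 0 < c n) (g : ℝ) (hg : 0 < g)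
    (ht : Tendsto (fun n : ℕ => c n / (n * c (n - 1))) atTop (𝓝 g)) (h : ℕ) :
    Tendsto (fun n : ℕ => (n.descFactorial h : ℝ) * c (n - h) / c n) atTop (𝓝 (g⁻¹ ^ h)) := by
  induction h with
  | zero =>
    have : ∀ n, c n / c n = 1 := fun n => div_self (hc n).ne'
    simp [this]
  | succ h ih =>
    have h1 := ((ht.inv₀ hg.ne').comp (tendsto_sub_atTop_nat h)).mul ih
    rw [pow_succ, mul_comm]
    refine h1.congr fun n => ?_
    have a := (hc (n - h)).ne'
    have b := (hc n).ne'
    have d := (hc (n - (h + 1))).ne'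
    simp only [Function.comp, Nat.descFactorial_succ, Nat.cast_mul, Nat.sub_sub]
    field_simp

theorem limit_pos_aux (c : ℕ → ℝ) (hc : ∀ n, 0 < c n) (g : ℝ)
    (ht : Tendsto (fun n : ℕ => c n / (n * c (n - 1))) atTop (𝓝 g))
    (hb : ∀ n : ℕ, (n : ℝ) * c n ≤ c (n + 1)) : 0 < g := by
  refine lt_of_lt_of_le (by norm_num : (0 : ℝ) < 1 / 2) (ge_of_tendsto ht ?_)
  filter_upwards [eventually_ge_atTop 2] with n hn
  obtain ⟨m, rfl⟩ : ∃ m, n = m + 1 := ⟨n - 1, by omega⟩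
  have hm : (1 : ℝ) ≤ m := by exact_mod_cast (by omega : 1 ≤ m)
  have h1 := hc m
  simp only [Nat.add_sub_cancel]
  push_cast
  rw [le_div_iff₀ (by positivity)]
  refine le_trans ?_ (hb m)
  nlinarith

theorem equiv_of_card_aux {α β : Type} [Finite α] [Finite β] (h : Nat.card α = Nat.card β) :
    Nonempty (α ≃ β) := by
  have := Fintype.ofFinite α
  have := Fintype.ofFinite β
  rw [Nat.card_eq_fintype_card, Nat.card_eq_fintype_card] at h
  exact ⟨Fintype.equivOfCardEq h⟩

/-- types of the same cardinality -/
noncomputable def equivOfCard {α β : Type} [Finite α] [Finite β] (h : Nat.card α = Nat.card β) :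
    α ≃ β := (equiv_of_card_aux h).some

/-- `W` is (the vertex set of) a connected component of `G`. -/
def IsComp {V : Type} (G : SimpleGraph V) (W : Set V) : Prop :=
  (∀ a b, G.Adj a b → a ∈ W → b ∈ W) ∧ (G.induce W).Connected

theorem sep_reach {V : Type} {G : SimpleGraph V} {W : Set V}
    (h : ∀ a b, G.Adj a b → a ∈ W → b ∈ W) {a b : V} (hr : G.Reachable a b) (ha : a ∈ W) :
    b ∈ W := by
  obtain ⟨p⟩ := hr
  induction p with
  | nil => exact ha
  | cons hadj _ ih => exact ih (h _ _ hadj ha)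

theorem isComp_supp {V : Type} (G : SimpleGraph V) (c : G.ConnectedComponent) :
    IsComp G c.supp :=
  ⟨fun a b hab ha => by
    rw [SimpleGraph.ConnectedComponent.mem_supp_iff] at *
    rw [← ha]
    exact SimpleGraph.ConnectedComponent.sound hab.symm.reachable, c.connected_toSimpleGraph⟩

theorem IsComp.eq_supp {V : Type} {G : SimpleGraph V} {W : Set V} (h : IsComp G W)
    {v : V} (hv : v ∈ W) : W = (G.connectedComponentMk v).supp := by
  ext x
  rw [SimpleGraph.ConnectedComponent.mem_supp_iff, SimpleGraph.ConnectedComponent.eq]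
  constructor
  · intro hx
    exact (h.2.preconnected ⟨x, hx⟩ ⟨v, hv⟩).map (SimpleGraph.Embedding.induce W).toHom
  · intro hx
    exact sep_reach h.1 hx.symm hv

theorem IsComp.nonempty {V : Type} {G : SimpleGraph V} {W : Set V} (h : IsComp G W) :
    W.Nonempty := by
  obtain ⟨x⟩ := h.2.nonempty
  exact ⟨x, x.2⟩

theorem IsComp.exists_supp {V : Type} {G : SimpleGraph V} {W : Set V} (h : IsComp G W) :
    ∃ c : G.ConnectedComponent, c.supp = W := by
  obtain ⟨v, hv⟩ := h.nonempty
  exact ⟨_, (h.eq_supp hv).symm⟩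

theorem IsComp.eq_of_mem {V : Type} {G : SimpleGraph V} {W W' : Set V} (h : IsComp G W)
    (h' : IsComp G W') {v : V} (hv : v ∈ W) (hv' : v ∈ W') : W = W' :=
  (h.eq_supp hv).trans (h'.eq_supp hv').symm

theorem class_iff_comp {C : GraphClassOn} (hD : ClassDecomposable C) {V : Type} [Finite V]
    (G : SimpleGraph V) : C V G ↔ ∀ W : Set V, IsComp G W → C W (G.induce W) := by
  rw [hD V G]
  constructor
  · intro h W hW
    obtain ⟨c, rfl⟩ := hW.exists_supp
    exact h c
  · intro h c
    exact h _ (isComp_supp G c)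

theorem numComponentsIso_eq {V VH : Type} (G : SimpleGraph V) (H : SimpleGraph VH) :
    numComponentsIso G H =
      Nat.card {W : Set V // IsComp G W ∧ Nonempty (G.induce W ≃g H)} := by
  unfold numComponentsIso
  refine Nat.card_congr (Equiv.ofBijective
    (fun c => ⟨c.1.supp, isComp_supp G c.1, c.2⟩) ⟨?_, ?_⟩)
  · rintro ⟨c, hc⟩ ⟨d, hd⟩ h
    simp only [Subtype.mk.injEq] at h
    exact Subtype.ext (SimpleGraph.ConnectedComponent.supp_injective h)
  · rintro ⟨W, hW, hi⟩
    obtain ⟨c, rfl⟩ := hW.exists_supp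
    exact ⟨⟨c, hi⟩, rfl⟩

/-- restriction of an isomorphism to an induced subgraph. -/
noncomputable def isoImage {V V' : Type} {G : SimpleGraph V} {G' : SimpleGraph V'} (f : G ↪g G') (T : Set V) :
    G.induce T ≃g G'.induce (f '' T) where
  toEquiv := Equiv.Set.image f T f.injective
  map_rel_iff' := by
    intro a b
    simp

theorem isComp_image {V V' : Type} {G : SimpleGraph V} {G' : SimpleGraph V'} (f : G ↪g G')
    (hf : ∀ a b, G'.Adj a b → a ∈ Set.range f → b ∈ Set.range f) (T : Set V) :
    IsComp G' (f '' T) ↔ IsComp G T := by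
  unfold IsComp
  rw [← (isoImage f T).connected_iff]
  refine and_congr_left fun _ => ?_
  constructor
  · intro h a b hab ha
    obtain ⟨x, hx, hxb⟩ := h (f a) (f b) (f.map_adj_iff.2 hab) ⟨a, ha, rfl⟩
    rwa [← f.injective hxb]
  · rintro h _ b hab ⟨a, ha, rfl⟩
    obtain ⟨b, rfl⟩ := hf _ _ hab ⟨a, rfl⟩
    exact ⟨b, h a b (f.map_adj_iff.1 hab) ha, rfl⟩

theorem nonempty_iso_congr {V V' V'' : Type} {G : SimpleGraph V} {G' : SimpleGraph V'}
    (e : G ≃g G') (H : SimpleGraph V'') : Nonempty (G ≃g H) ↔ Nonempty (G' ≃g H) :=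
  ⟨fun ⟨f⟩ => ⟨e.symm.trans f⟩, fun ⟨f⟩ => ⟨e.trans f⟩⟩

theorem numComponentsIso_congr {V V' VH : Type} {G : SimpleGraph V} {G' : SimpleGraph V'}
    (e : G ≃g G') (H : SimpleGraph VH) : numComponentsIso G H = numComponentsIso G' H := by
  rw [numComponentsIso_eq, numComponentsIso_eq]
  have key : ∀ T : Set V, (IsComp G T ∧ Nonempty (G.induce T ≃g H)) ↔
      (IsComp G' (e '' T) ∧ Nonempty (G'.induce (e '' T) ≃g H)) := by
    intro T
    have h1 := isComp_image e.toEmbedding (fun a b _ _ => e.surjective b) T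
    have h2 := nonempty_iso_congr (isoImage e.toEmbedding T) H
    exact and_congr h1.symm h2
  refine Nat.card_congr (Equiv.ofBijective
    (fun c => ⟨e '' c.1, (key c.1).1 c.2⟩) ⟨?_, ?_⟩)
  · rintro ⟨c, hc⟩ ⟨d, hd⟩ h
    simp only [Subtype.mk.injEq] at h
    exact Subtype.ext (e.injective.image_injective h)
  · rintro ⟨W, hW⟩
    have hs : e '' (e ⁻¹' W) = W := Set.image_preimage_eq _ e.surjective
    refine ⟨⟨e ⁻¹' W, (key _).2 (by rw [hs]; exact hW)⟩, Subtype.ext hs⟩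

section Glue
variable {V : Type} {G : SimpleGraph V} {W : Set V}

theorem compl_sep (hsep : ∀ a b, G.Adj a b → a ∈ W → b ∈ W) :
    ∀ a b, G.Adj a b → a ∈ Wᶜ → b ∈ Wᶜ :=
  fun a b hab ha hb => ha (hsep b a hab.symm hb)

theorem isComp_compl_image (hW : ∀ a b, G.Adj a b → a ∈ W → b ∈ W)
    (T : Set (Wᶜ : Set V)) :
    IsComp G (Subtype.val '' T) ↔ IsComp (G.induce Wᶜ) T := by
  refine isComp_image (SimpleGraph.Embedding.induce Wᶜ) ?_ T
  intro a b hab ha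
  have hr : Set.range (SimpleGraph.Embedding.induce (G := G) Wᶜ) = Wᶜ := Subtype.range_coe
  rw [hr] at ha ⊢
  exact compl_sep hW a b hab ha

/-- induced subgraph of the induced subgraph. -/
noncomputable def complIso (G : SimpleGraph V) (T : Set (Wᶜ : Set V)) :
    (G.induce Wᶜ).induce T ≃g G.induce (Subtype.val '' T) :=
  isoImage (SimpleGraph.Embedding.induce Wᶜ) T

theorem IsComp.cases (hW : IsComp G W) {T : Set V} (hT : IsComp G T) :
    T = W ∨ ∃ S : Set (Wᶜ : Set V), Subtype.val '' S = T := by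
  by_cases h : ∃ v, v ∈ T ∧ v ∈ W
  · obtain ⟨v, h1, h2⟩ := h
    exact Or.inl (hT.eq_of_mem hW h1 h2)
  · right
    refine ⟨Subtype.val ⁻¹' T, ?_⟩
    rw [Set.image_preimage_eq_iff, Subtype.range_coe]
    intro x hx hxW
    exact h ⟨x, hx, hxW⟩

theorem class_glue {C : GraphClassOn} (hIso : ClassIsoInvariant C) (hD : ClassDecomposable C)
    [Finite V] (hW : IsComp G W) :
    C V G ↔ C W (G.induce W) ∧ C (Wᶜ : Set V) (G.induce Wᶜ) := by
  rw [class_iff_comp hD G, class_iff_comp hD (G.induce Wᶜ)]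
  constructor
  · intro h
    refine ⟨h W hW, fun S hS => ?_⟩
    rw [hIso _ _ _ _ ⟨complIso G S⟩]
    exact h _ ((isComp_compl_image hW.1 S).2 hS)
  · rintro ⟨h1, h2⟩ T hT
    rcases hW.cases hT with rfl | ⟨S, rfl⟩
    · exact h1
    · rw [← hIso _ _ _ _ ⟨complIso G S⟩]
      exact h2 S ((isComp_compl_image hW.1 S).1 hT)

theorem num_glue [Finite V] {VH : Type} (H : SimpleGraph VH) (hW : IsComp G W)
    (hi : Nonempty (G.induce W ≃g H)) :
    numComponentsIso G H = numComponentsIso (G.induce Wᶜ) H + 1 := by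
  rw [numComponentsIso_eq, numComponentsIso_eq]
  rw [← Finite.card_option]
  symm
  have key : ∀ S : Set (Wᶜ : Set V),
      (IsComp (G.induce Wᶜ) S ∧ Nonempty ((G.induce Wᶜ).induce S ≃g H)) ↔
      (IsComp G (Subtype.val '' S) ∧ Nonempty (G.induce (Subtype.val '' S) ≃g H)) := by
    intro S
    exact and_congr (isComp_compl_image hW.1 S).symm (nonempty_iso_congr (complIso G S) H)
  have hneW : ∀ S : Set (Wᶜ : Set V), Subtype.val '' S ≠ W := by
    intro S hS
    obtain ⟨v, hv⟩ := hW.nonempty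
    have hv' := hv
    rw [← hS] at hv'
    obtain ⟨x, _, rfl⟩ := hv'
    exact x.2 hv
  refine Nat.card_congr (Equiv.ofBijective
    (fun o => Option.elim o ⟨W, hW, hi⟩
      (fun S => ⟨Subtype.val '' S.1, (key S.1).1 S.2⟩)) ⟨?_, ?_⟩)
  · rintro (_ | ⟨S, hS⟩) (_ | ⟨S', hS'⟩) h
    · rfl
    · simp only [Option.elim, Subtype.mk.injEq] at h
      exact absurd h.symm (hneW S')
    · simp only [Option.elim, Subtype.mk.injEq] at h
      exact absurd h (hneW S)
    · simp only [Option.elim, Subtype.mk.injEq] at h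
      have := Subtype.val_injective.image_injective h
      subst this
      rfl
  · rintro ⟨T, hT, hTi⟩
    rcases hW.cases hT with rfl | ⟨S, rfl⟩
    · exact ⟨none, rfl⟩
    · exact ⟨some ⟨S, (key S).2 ⟨hT, hTi⟩⟩, rfl⟩

end Glue

/-- Graphs for which `W` is a union of components correspond to pairs of graphs. -/
theorem card_glue {V : Type} (W : Set V) (P : SimpleGraph W → Prop)
    (Q : SimpleGraph (Wᶜ : Set V) → Prop) :
    Nat.card {G : SimpleGraph V // (∀ a b, G.Adj a b → a ∈ W → b ∈ W) ∧
      P (G.induce W) ∧ Q (G.induce Wᶜ)} = Nat.card {K // P K} * Nat.card {K // Q K} := by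
  rw [← Nat.card_prod]
  refine Nat.card_congr (Equiv.ofBijective
    (fun G => (⟨G.1.induce W, G.2.2.1⟩, ⟨G.1.induce Wᶜ, G.2.2.2⟩)) ⟨?_, ?_⟩)
  · rintro ⟨G, hG, hG2⟩ ⟨G', hG', hG2'⟩ h
    simp only [Prod.mk.injEq, Subtype.mk.injEq] at h
    obtain ⟨h1, h2⟩ := h
    apply Subtype.ext
    ext a b
    simp only
    by_cases ha : a ∈ W <;> by_cases hb : b ∈ W
    · have := congrArg (fun K => K.Adj ⟨a, ha⟩ ⟨b, hb⟩) h1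
      simpa using this
    · exact ⟨fun h => absurd (hG _ _ h ha) hb, fun h => absurd (hG' _ _ h ha) hb⟩
    · exact ⟨fun h => absurd (hG _ _ h.symm hb) ha, fun h => absurd (hG' _ _ h.symm hb) ha⟩
    · have := congrArg (fun K => K.Adj ⟨a, ha⟩ ⟨b, hb⟩) h2
      simpa using this
  · rintro ⟨⟨K, hK⟩, ⟨L, hL⟩⟩
    let G : SimpleGraph V :=
      { Adj := fun a b => (∃ (ha : a ∈ W) (hb : b ∈ W), K.Adj ⟨a, ha⟩ ⟨b, hb⟩) ∨
          (∃ (ha : a ∈ Wᶜ) (hb : b ∈ Wᶜ), L.Adj ⟨a, ha⟩ ⟨b, hb⟩)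
        symm := ⟨by
          rintro a b (⟨ha, hb, h⟩ | ⟨ha, hb, h⟩)
          · exact Or.inl ⟨hb, ha, h.symm⟩
          · exact Or.inr ⟨hb, ha, h.symm⟩⟩
        loopless := ⟨by
          rintro a (⟨ha, hb, h⟩ | ⟨ha, hb, h⟩)
          · exact h.ne rfl
          · exact h.ne rfl⟩ }
    have h1 : G.induce W = K := by
      ext ⟨a, ha⟩ ⟨b, hb⟩
      simp [G, ha, hb]
    have h2 : G.induce Wᶜ = L := by
      ext ⟨a, ha⟩ ⟨b, hb⟩
      have ha' : a ∉ W := ha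
      have hb' : b ∉ W := hb
      simp [G, ha', hb']
    refine ⟨⟨G, ?_, by rw [h1]; exact hK, by rw [h2]; exact hL⟩, ?_⟩
    · rintro a b (⟨ha, hb, h⟩ | ⟨ha, hb, h⟩) haW
      · exact hb
      · exact absurd haW ha
    · simp only [h1, h2]

/-- Counting only depends on the number of vertices. -/
theorem card_transfer {V V' : Type} (e : V ≃ V') (P : SimpleGraph V → Prop)
    (P' : SimpleGraph V' → Prop)
    (h : ∀ G G', Nonempty (G ≃g G') → (P G ↔ P' G')) :
    Nat.card {G // P G} = Nat.card {G // P' G} := by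
  refine Nat.card_congr (e.simpleGraph.subtypeEquiv fun G => h _ _ ?_)
  exact ⟨(SimpleGraph.Iso.comap e.symm G).symm⟩

/-- number of graphs with exactly k components -/
noncomputable def cntK (C : GraphClassOn) {VH : Type} (H : SimpleGraph VH) (n k : ℕ) : ℕ :=
  Nat.card {G : SimpleGraph (Fin n) // C (Fin n) G ∧ numComponentsIso G H = k}

/-- number of copies of `H` in the class -/
noncomputable def cntH (C : GraphClassOn) {VH : Type} (H : SimpleGraph VH) (h : ℕ) : ℕ :=
  Nat.card {G : SimpleGraph (Fin h) // C (Fin h) G ∧ Nonempty (G ≃g H)}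

theorem cnt_fixed {C : GraphClassOn} (hIso : ClassIsoInvariant C) (hD : ClassDecomposable C)
    {VH : Type} [Finite VH] (H : SimpleGraph VH) (hH : H.Connected) (n k : ℕ) (W : Set (Fin n)) :
    Nat.card {G : SimpleGraph (Fin n) // (C (Fin n) G ∧ numComponentsIso G H = k + 1) ∧
      IsComp G W ∧ Nonempty (G.induce W ≃g H)} =
    if W.ncard = Nat.card VH then cntH C H (Nat.card VH) * cntK C H (n - Nat.card VH) k else 0 := by
  have h1 : ∀ G : SimpleGraph (Fin n), ((C (Fin n) G ∧ numComponentsIso G H = k + 1) ∧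
      IsComp G W ∧ Nonempty (G.induce W ≃g H)) ↔
      ((∀ a b, G.Adj a b → a ∈ W → b ∈ W) ∧ (C W (G.induce W) ∧ Nonempty (G.induce W ≃g H)) ∧
        (C (Wᶜ : Set (Fin n)) (G.induce Wᶜ) ∧ numComponentsIso (G.induce Wᶜ) H = k)) := by
    intro G
    constructor
    · rintro ⟨⟨h1, h2⟩, hW, hi⟩
      rw [class_glue hIso hD hW] at h1
      rw [num_glue H hW hi] at h2
      exact ⟨hW.1, ⟨h1.1, hi⟩, h1.2, by omega⟩
    · rintro ⟨hs, ⟨h1, hi⟩, h2, h3⟩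
      have hW : IsComp G W := ⟨hs, by
        obtain ⟨e⟩ := hi
        exact e.connected_iff.2 hH⟩
      rw [class_glue hIso hD hW, num_glue H hW hi]
      exact ⟨⟨⟨h1, h2⟩, by omega⟩, hW, hi⟩
  rw [Nat.card_congr (Equiv.subtypeEquivRight h1), card_glue W
    (fun K => C W K ∧ Nonempty (K ≃g H))
    (fun K => C (Wᶜ : Set (Fin n)) K ∧ numComponentsIso K H = k)]
  split_ifs with hc
  · have hcW : Nat.card W = Nat.card (Fin (Nat.card VH)) := by
      rw [Nat.card_fin, ← hc]; rfl
    have hcW' : Nat.card (Wᶜ : Set (Fin n)) = Nat.card (Fin (n - Nat.card VH)) := by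
      rw [Nat.card_fin, ← hc]
      have := Set.ncard_add_ncard_compl W
      rw [Nat.card_fin] at this
      rw [Nat.card_coe_set_eq]
      omega
    congr 1
    · exact card_transfer (equivOfCard hcW) _ _ fun G G' hG =>
        and_congr (hIso _ _ _ _ hG) (nonempty_iso_congr hG.some H)
    · exact card_transfer (equivOfCard hcW') _ _ fun G G' hG =>
        and_congr (hIso _ _ _ _ hG) (by rw [numComponentsIso_congr hG.some H])
  · have : IsEmpty {K : SimpleGraph W // C W K ∧ Nonempty (K ≃g H)} := by
      refine ⟨fun ⟨K, _, ⟨e⟩⟩ => hc ?_⟩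
      rw [← Nat.card_congr e.toEquiv]; rfl
    simp

theorem cnt_rec {C : GraphClassOn} (hIso : ClassIsoInvariant C) (hD : ClassDecomposable C)
    {VH : Type} [Finite VH] (H : SimpleGraph VH) (hH : H.Connected) (n k : ℕ) :
    (k + 1) * cntK C H n (k + 1) = n.choose (Nat.card VH) *
      (cntH C H (Nat.card VH) * cntK C H (n - Nat.card VH) k) := by
  classical
  let R : SimpleGraph (Fin n) → Set (Fin n) → Prop := fun G W =>
    (C (Fin n) G ∧ numComponentsIso G H = k + 1) ∧ IsComp G W ∧ Nonempty (G.induce W ≃g H)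
  have hdc : ∑ G : SimpleGraph (Fin n), Nat.card {W // R G W} =
      ∑ W : Set (Fin n), Nat.card {G // R G W} := by
    rw [← Nat.card_sigma, ← Nat.card_sigma]
    exact Nat.card_congr
      ⟨fun x => ⟨x.2.1, x.1, x.2.2⟩, fun x => ⟨x.2.1, x.1, x.2.2⟩, fun _ => rfl, fun _ => rfl⟩
  have hl : ∑ G : SimpleGraph (Fin n), Nat.card {W // R G W} = (k + 1) * cntK C H n (k + 1) := by
    have : ∀ G : SimpleGraph (Fin n), Nat.card {W // R G W} =
        if C (Fin n) G ∧ numComponentsIso G H = k + 1 then k + 1 else 0 := by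
      intro G
      split_ifs with h
      · rw [← h.2, numComponentsIso_eq]
        refine Nat.card_congr (Equiv.subtypeEquivRight fun W => ?_)
        simp only [R]
        tauto
      · have : IsEmpty {W // R G W} := ⟨fun W => h W.2.1⟩
        simp
    rw [Finset.sum_congr rfl (fun G _ => this G), ← Finset.sum_filter, Finset.sum_const,
      smul_eq_mul, mul_comm]
    congr 1
    rw [cntK, Nat.card_eq_fintype_card, Fintype.card_subtype]
  have hr : ∑ W : Set (Fin n), Nat.card {G // R G W} = n.choose (Nat.card VH) *
      (cntH C H (Nat.card VH) * cntK C H (n - Nat.card VH) k) := by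
    rw [Finset.sum_congr rfl (fun W _ => cnt_fixed hIso hD H hH n k W), ← Finset.sum_filter,
      Finset.sum_const, smul_eq_mul]
    congr 1
    have h1 : (Finset.univ.filter fun W : Set (Fin n) => W.ncard = Nat.card VH).card =
        (Finset.powersetCard (Nat.card VH) (Finset.univ : Finset (Fin n))).card := by
      symm
      refine Finset.card_bij (fun s _ => (s : Set (Fin n))) ?_ ?_ ?_
      · intro s hs
        simp at hs
        simp [hs]
      · intro s _ t _ h
        exact Finset.coe_injective h
      · intro W hW
        simp at hW
        refine ⟨W.toFinset, ?_, by simp⟩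
        simp [← hW, Set.ncard_eq_toFinset_card']
    rw [h1, Finset.card_powersetCard, Finset.card_univ, Fintype.card_fin]
  rw [← hl, hdc, hr]

theorem numComponentsIso_le {V VH : Type} [Finite V] (G : SimpleGraph V) (H : SimpleGraph VH) :
    numComponentsIso G H ≤ Nat.card V := by
  have hf : Function.Surjective (G.connectedComponentMk) := Quot.mk_surjective
  have : Finite G.ConnectedComponent := Finite.of_surjective _ hf
  unfold numComponentsIso
  exact (Finite.card_subtype_le _).trans (Nat.card_le_card_of_surjective _ hf)

theorem cntK_zero {C : GraphClassOn} {VH : Type} (H : SimpleGraph VH) (n k : ℕ) (h : n < k) :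
    cntK C H n k = 0 := by
  have : IsEmpty {G : SimpleGraph (Fin n) // C (Fin n) G ∧ numComponentsIso G H = k} := by
    refine ⟨fun G => ?_⟩
    have := numComponentsIso_le G.1 H
    rw [G.2.2, Nat.card_fin] at this
    omega
  simp [cntK]

theorem cntK_sum {C : GraphClassOn} {VH : Type} (H : SimpleGraph VH) (n : ℕ) :
    ∑ k ∈ Finset.range (n + 1), cntK C H n k = classCount C n := by
  classical
  unfold cntK classCount
  simp only [Nat.card_eq_fintype_card, Fintype.card_subtype]
  rw [Finset.card_eq_sum_card_fiberwise (f := fun G => numComponentsIso G H)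
    (t := Finset.range (n + 1))]
  · simp only [Finset.filter_filter]
  · intro G _
    have := numComponentsIso_le G H
    rw [Nat.card_fin] at this
    simp
    omega

theorem classCount_pos {C : GraphClassOn} (hD : ClassDecomposable C)
    (hne : ∀ n : ℕ, 1 ≤ n → ∃ G : SimpleGraph (Fin n), C (Fin n) G) (n : ℕ) :
    0 < classCount C n := by
  have : ∃ G : SimpleGraph (Fin n), C (Fin n) G := by
    rcases Nat.eq_zero_or_pos n with rfl | hn
    · refine ⟨⊥, (hD _ _).2 ?_⟩
      intro c
      exact c.ind (fun v => v.elim0)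
    · exact hne n hn
  obtain ⟨G, hG⟩ := this
  have : Nonempty {G : SimpleGraph (Fin n) // C (Fin n) G} := ⟨⟨G, hG⟩⟩
  exact Nat.card_pos

theorem map_some_some {V : Type} (G : SimpleGraph V) (a b : V) :
    (SimpleGraph.map some G).Adj (some a) (some b) ↔ G.Adj a b :=
  SimpleGraph.map_adj_apply (f := Function.Embedding.some)

theorem map_some_none {V : Type} (G : SimpleGraph V) (a : Option V) :
    ¬ (SimpleGraph.map some G).Adj a none := by
  intro h
  have h' : (SimpleGraph.map Function.Embedding.some G).Adj a none := h
  rw [SimpleGraph.map_adj] at h'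
  obtain ⟨x, y, _, _, h3⟩ := h'
  cases h3

theorem reach_none_map {V : Type} (G : SimpleGraph V) (u : V) :
    ¬(G.map Function.Embedding.some).Reachable (some u) none := by
  intro h
  have := sep_reach (G := G.map Function.Embedding.some) (W := {x | x ≠ none}) ?_ h (by simp)
  · simp at this
  · rintro a b hab _
    rw [SimpleGraph.map_adj] at hab
    obtain ⟨x, y, _, rfl, rfl⟩ := hab
    simp

theorem class_map_some {C : GraphClassOn} (hIso : ClassIsoInvariant C) (hD : ClassDecomposable C)
    (h1 : ∃ G : SimpleGraph (Fin 1), C (Fin 1) G) {V : Type} [Finite V] (G : SimpleGraph V)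
    (hG : C V G) : C (Option V) (G.map Function.Embedding.some) := by
  have hW : IsComp (G.map Function.Embedding.some) {none} := by
    refine ⟨?_, ?_⟩
    · rintro a b hab ha
      rw [SimpleGraph.map_adj] at hab
      obtain ⟨x, y, _, rfl, rfl⟩ := hab
      simp at ha
    · have : Nonempty ({none} : Set (Option V)) := ⟨⟨none, rfl⟩⟩
      exact ⟨SimpleGraph.Preconnected.of_subsingleton⟩
  rw [class_glue hIso hD hW]
  constructor
  · obtain ⟨K, hK⟩ := h1
    refine (hIso _ _ _ _ ⟨?_⟩).1 hK
    exact ⟨Equiv.ofUnique (Fin 1) ({none} : Set (Option V)), by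
      intro a b
      have := Subsingleton.elim a b
      subst this
      simp⟩
  · refine (hIso _ _ _ _ ⟨?_⟩).1 hG
    refine ⟨Equiv.ofBijective (fun v => ⟨some v, by simp⟩) ⟨?_, ?_⟩, ?_⟩
    · intro a b h
      simpa using h
    · rintro ⟨_ | v, hv⟩
      · simp at hv
      · exact ⟨v, rfl⟩
    · intro a b
      exact map_some_some G a b

theorem classCount_succ_ge {C : GraphClassOn} (hIso : ClassIsoInvariant C) (hAdd : ClassAddable C)
    (h1 : ∃ G : SimpleGraph (Fin 1), C (Fin 1) G) (n : ℕ) :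
    n * classCount C n ≤ classCount C (n + 1) := by
  have hc : classCount C (n + 1) =
      Nat.card {G : SimpleGraph (Option (Fin n)) // C (Option (Fin n)) G} := by
    refine card_transfer (equivOfCard (by simp)) _ _ fun G G' hG => hIso _ _ _ _ hG
  have hl : n * classCount C n = Nat.card (Fin n × {G : SimpleGraph (Fin n) // C (Fin n) G}) := by
    rw [Nat.card_prod, Nat.card_fin]; rfl
  rw [hc, hl]
  refine Nat.card_le_card_of_injective
    (fun p => ⟨p.2.1.map Function.Embedding.some ⊔
      SimpleGraph.fromEdgeSet {s(some p.1, none)}, hAdd.2 _ _ _ _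
        (class_map_some hIso hAdd.1 h1 _ p.2.2) (reach_none_map _ _)⟩) ?_
  rintro ⟨u, G, hG⟩ ⟨u', G', hG'⟩ h
  simp only [Subtype.mk.injEq] at h
  have hu : u = u' := by
    have := congrArg (fun K => K.Adj (some u) none) h
    simpa [map_some_some, map_some_none] using this
  have hGG : G = G' := by
    ext a b
    have := congrArg (fun K => K.Adj (some a) (some b)) h
    simpa [map_some_some, map_some_none] using this
  subst hu hGG
  rfl

theorem components_iso_count_converges
    (C : GraphClassOn) (hIso : ClassIsoInvariant C) (hAdd : ClassAddable C)
    (hSmooth : ClassSmooth C)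
    (hne : ∀ n : ℕ, 1 ≤ n → ∃ G : SimpleGraph (Fin n), C (Fin n) G)
    (VH : Type) [Finite VH] (H : SimpleGraph VH) (hH : H.Connected) (k : ℕ) :
    ∃ p : ℝ,
      Tendsto (fun n : ℕ => classProb C n (fun G => numComponentsIso G H = k))
        atTop (𝓝 p) := by
  obtain ⟨g, hg⟩ := hSmooth
  have hc : ∀ n, (0 : ℝ) < classCount C n := fun n => by
    exact_mod_cast classCount_pos hAdd.1 hne n
  have hgpos : 0 < g := limit_pos_aux (fun n => (classCount C n : ℝ)) hc g hg fun n => by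
    exact_mod_cast classCount_succ_ge hIso hAdd (hne 1 le_rfl) n
  have hh : 1 ≤ Nat.card VH := by
    have := hH.nonempty
    exact Nat.card_pos
  set h := Nat.card VH with hdef
  have hrat := ratio_aux (fun n => (classCount C n : ℝ)) hc g hgpos hg h
  have hlam := hrat.mul_const ((cntH C H h : ℝ) / (h.factorial : ℝ))
  refine analytic_aux (fun n k => (cntK C H n k : ℝ) / classCount C n) h hh _ _ hlam ?_ ?_ ?_ ?_ k
  · simp [Nat.descFactorial_eq_zero_iff_lt.2 hh]
  · intro n k hk
    simp [cntK_zero H n k hk]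
  · intro n
    rw [← Finset.sum_div, div_eq_one_iff_eq (hc n).ne']
    exact_mod_cast cntK_sum H n
  · intro n k
    have hr : ((k : ℝ) + 1) * cntK C H n (k + 1) = (n.choose h : ℝ) *
      (cntH C H h * cntK C H (n - h) k) := by
      exact_mod_cast cnt_rec hIso hAdd.1 H hH n k
    have hd : (n.descFactorial h : ℝ) = (h.factorial : ℝ) * (n.choose h : ℝ) := by
      exact_mod_cast Nat.descFactorial_eq_factorial_mul_choose n h
    have a := (hc n).ne'
    have b := (hc (n - h)).ne'
    have d : (h.factorial : ℝ) ≠ 0 := by positivity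
    rw [hd, ← mul_div_assoc, hr]
    field_simp
end

section
/- Let C be a smooth addable class of finite simple graphs with C_n nonempty for every n ≥ 1, let H₁ and H₂ be non-isomorphic finite connected simple graphs, and let k₁, k₂ ∈ ℕ. Then the probability that the uniformly random graph R_n(C) has exactly k₁ connected components isomorphic to H₁ and exactly k₂ connected components isomorphic to H₂ converges, and its limit equals the product of the limits of the probabilities of the two individual events; that is, these events are asymptotically independent. -/
open Filter Topology FirstOrder

section Components

open SimpleGraph

lemma aux_closed_reach {V W : Type} {G : SimpleGraph V} {K : SimpleGraph W} (f : G ↪g K)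
    (hf : ∀ a b, K.Adj (f a) b → ∃ a', f a' = b) (x y : W) (h : K.Reachable x y) :
    ∀ a, f a = x → ∃ a', f a' = y ∧ G.Reachable a a' := by
  obtain ⟨p⟩ := h
  induction p with
  | nil => intro a ha; exact ⟨a, ha, Reachable.refl _⟩
  | cons hadj p ih =>
    intro a ha
    subst ha
    obtain ⟨a', rfl⟩ := hf _ _ hadj
    obtain ⟨a'', h1, h2⟩ := ih a' rfl
    exact ⟨a'', h1, (Adj.reachable (f.map_adj_iff.1 hadj)).trans h2⟩

lemma aux_supp_map {V W : Type} {G : SimpleGraph V} {K : SimpleGraph W} (f : G ↪g K)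
    (hf : ∀ a b, K.Adj (f a) b → ∃ a', f a' = b) (c : G.ConnectedComponent) :
    (c.map f.toHom).supp = f '' c.supp := by
  induction c using ConnectedComponent.ind with
  | h v =>
    ext y
    simp only [ConnectedComponent.mem_supp_iff, ConnectedComponent.map_mk, Set.mem_image,
      ConnectedComponent.eq]
    constructor
    · intro h
      obtain ⟨a', h1, h2⟩ := aux_closed_reach f hf _ y h.symm v rfl
      exact ⟨a', h2.symm, h1⟩
    · rintro ⟨x, hx, rfl⟩
      exact hx.map f.toHom

lemma aux_induce_image {V W : Type} {G : SimpleGraph V} {K : SimpleGraph W} (f : G ↪g K)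
    (S : Set V) (T : Set W) (hT : T = f '' S) : Nonempty (G.induce S ≃g K.induce T) := by
  subst hT
  refine ⟨⟨Equiv.Set.image f S f.injective, ?_⟩⟩
  intro a b
  exact f.map_adj_iff

lemma aux_map_inj {V W : Type} {G : SimpleGraph V} {K : SimpleGraph W} (f : G ↪g K)
    (hf : ∀ a b, K.Adj (f a) b → ∃ a', f a' = b) :
    Function.Injective (fun c : G.ConnectedComponent => c.map f.toHom) := by
  intro c d h
  apply ConnectedComponent.supp_injective
  have := congrArg ConnectedComponent.supp h
  simp only [aux_supp_map f hf] at this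
  exact f.injective.image_injective this

lemma aux_inl_closed {V W : Type} (G : SimpleGraph V) (K : SimpleGraph W) :
    ∀ a b, (G ⊕g K).Adj ((Embedding.sumInl : G ↪g G ⊕g K) a) b →
      ∃ a', (Embedding.sumInl : G ↪g G ⊕g K) a' = b := by
  rintro a (b | b) h
  · exact ⟨b, rfl⟩
  · simp at h

lemma aux_inr_closed {V W : Type} (G : SimpleGraph V) (K : SimpleGraph W) :
    ∀ a b, (G ⊕g K).Adj ((Embedding.sumInr : K ↪g G ⊕g K) a) b →
      ∃ a', (Embedding.sumInr : K ↪g G ⊕g K) a' = b := by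
  rintro a (b | b) h
  · simp at h
  · exact ⟨b, rfl⟩

/-- map of components of summands into components of the sum -/
def auxSumComp {V W : Type} (G : SimpleGraph V) (K : SimpleGraph W) :
    G.ConnectedComponent ⊕ K.ConnectedComponent → (G ⊕g K).ConnectedComponent :=
  Sum.elim (fun c => c.map (Embedding.sumInl : G ↪g G ⊕g K).toHom)
    (fun c => c.map (Embedding.sumInr : K ↪g G ⊕g K).toHom)

lemma auxSumComp_bij {V W : Type} (G : SimpleGraph V) (K : SimpleGraph W) :
    Function.Bijective (auxSumComp G K) := by
  constructor
  · have key : ∀ (c : G.ConnectedComponent) (d : K.ConnectedComponent),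
        c.map (Embedding.sumInl : G ↪g G ⊕g K).toHom ≠
          d.map (Embedding.sumInr : K ↪g G ⊕g K).toHom := by
      intro c d
      induction c using ConnectedComponent.ind
      induction d using ConnectedComponent.ind
      intro h
      simp only [ConnectedComponent.map_mk, ConnectedComponent.eq] at h
      exact not_reachable_sum_inl_inr _ _ h
    rintro (c | c) (d | d) h
    · exact congrArg _ (aux_map_inj _ (aux_inl_closed G K) h)
    · exact (key c d h).elim
    · exact (key d c h.symm).elim
    · exact congrArg _ (aux_map_inj _ (aux_inr_closed G K) h)
  · intro c
    induction c using ConnectedComponent.ind with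
    | h v =>
      rcases v with v | v
      · exact ⟨Sum.inl (G.connectedComponentMk v), rfl⟩
      · exact ⟨Sum.inr (K.connectedComponentMk v), rfl⟩

lemma auxSumComp_inl {V W : Type} (G : SimpleGraph V) (K : SimpleGraph W)
    (c : G.ConnectedComponent) :
    Nonempty (G.induce c.supp ≃g (G ⊕g K).induce (auxSumComp G K (Sum.inl c)).supp) :=
  aux_induce_image _ _ _ (aux_supp_map _ (aux_inl_closed G K) c)

lemma auxSumComp_inr {V W : Type} (G : SimpleGraph V) (K : SimpleGraph W)
    (c : K.ConnectedComponent) :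
    Nonempty (K.induce c.supp ≃g (G ⊕g K).induce (auxSumComp G K (Sum.inr c)).supp) :=
  aux_induce_image _ _ _ (aux_supp_map _ (aux_inr_closed G K) c)

lemma aux_class_sum (C : GraphClassOn) (hIso : ClassIsoInvariant C) (hD : ClassDecomposable C)
    {V W : Type} [Finite V] [Finite W] (G : SimpleGraph V) (K : SimpleGraph W) :
    C (V ⊕ W) (G ⊕g K) ↔ C V G ∧ C W K := by
  rw [hD (V ⊕ W), hD V, hD W, (auxSumComp_bij G K).surjective.forall, Sum.forall]
  exact and_congr
    (forall_congr' fun c => (hIso _ _ _ _ (auxSumComp_inl G K c)).symm)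
    (forall_congr' fun c => (hIso _ _ _ _ (auxSumComp_inr G K c)).symm)

lemma aux_nonempty_iso_congr {U V W : Type} {G : SimpleGraph U} {K : SimpleGraph V}
    (H : SimpleGraph W) (h : Nonempty (G ≃g K)) : Nonempty (G ≃g H) ↔ Nonempty (K ≃g H) := by
  obtain ⟨e⟩ := h
  exact ⟨fun ⟨f⟩ => ⟨e.symm.trans f⟩, fun ⟨f⟩ => ⟨e.trans f⟩⟩

lemma aux_num_sum {V W U : Type} [Finite V] [Finite W] (G : SimpleGraph V) (K : SimpleGraph W)
    (H : SimpleGraph U) :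
    numComponentsIso (G ⊕g K) H = numComponentsIso G H + numComponentsIso K H := by
  unfold numComponentsIso
  rw [← Nat.card_sum]
  symm
  refine Nat.card_congr (Equiv.trans ?_ ((Equiv.ofBijective _ (auxSumComp_bij G K)).subtypeEquiv
    (p := fun c => Nonempty ((G ⊕g K).induce (auxSumComp G K c).supp ≃g H)) (fun a => Iff.rfl)))
  refine Equiv.trans ?_ (Equiv.subtypeSum).symm
  refine Equiv.sumCongr ?_ ?_
  · exact Equiv.subtypeEquivRight fun c => aux_nonempty_iso_congr H (auxSumComp_inl G K c)
  · exact Equiv.subtypeEquivRight fun c => aux_nonempty_iso_congr H (auxSumComp_inr G K c)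

lemma aux_num_iso {V W U : Type} {G : SimpleGraph V} {K : SimpleGraph W}
    (e : G ≃g K) (H : SimpleGraph U) :
    numComponentsIso G H = numComponentsIso K H := by
  unfold numComponentsIso
  refine Nat.card_congr (e.connectedComponentEquiv.subtypeEquiv fun c => ?_)
  apply aux_nonempty_iso_congr
  exact aux_induce_image e.toEmbedding _ _
    (aux_supp_map e.toEmbedding (fun a b _ => ⟨e.symm b, by simp⟩) c)

lemma aux_num_self {V U : Type} {G : SimpleGraph V} (hG : G.Connected)
    {H : SimpleGraph U} (h : Nonempty (G ≃g H)) : numComponentsIso G H = 1 := by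
  unfold numComponentsIso
  rw [Nat.card_eq_one_iff_unique]
  have := hG.preconnected.subsingleton_connectedComponent
  refine ⟨inferInstance, ?_⟩
  obtain ⟨v⟩ := hG.nonempty
  refine ⟨⟨G.connectedComponentMk v, ?_⟩⟩
  have hs : (Set.univ : Set V) = (G.connectedComponentMk v).supp := by
    ext w
    simp only [Set.mem_univ, ConnectedComponent.mem_supp_iff, true_iff]
    exact Subsingleton.elim _ _
  rw [← hs]
  exact (aux_nonempty_iso_congr H ⟨induceUnivIso G⟩).2 h

lemma aux_num_other {V U : Type} {G : SimpleGraph V} (hG : G.Connected)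
    {H : SimpleGraph U} (h : ¬ Nonempty (G ≃g H)) : numComponentsIso G H = 0 := by
  unfold numComponentsIso
  have := hG.preconnected.subsingleton_connectedComponent
  rw [Nat.card_eq_zero]
  left
  refine ⟨fun ⟨c, hc⟩ => h ?_⟩
  have hs : (Set.univ : Set V) = c.supp := by
    ext w
    simp only [Set.mem_univ, ConnectedComponent.mem_supp_iff, true_iff]
    exact Subsingleton.elim _ _
  rw [← hs] at hc
  exact (aux_nonempty_iso_congr H ⟨induceUnivIso G⟩).1 hc

/-- number of components isomorphic to a connected `H` via closed vertex sets -/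
lemma aux_num_sets {V U : Type} [Fintype V] (G : SimpleGraph V)
    {H : SimpleGraph U} (hH : H.Connected) :
    numComponentsIso G H = Nat.card {S : Finset V //
      (∀ a ∈ S, ∀ b, G.Adj a b → b ∈ S) ∧ Nonempty (G.induce (S : Set V) ≃g H)} := by
  classical
  unfold numComponentsIso
  refine Nat.card_congr (Equiv.ofBijective (fun c => ⟨c.1.supp.toFinset, ?_, ?_⟩) ⟨?_, ?_⟩)
  · intro a ha b hab
    simp only [Set.mem_toFinset] at *
    exact (c.1.mem_supp_congr_adj hab).1 ha
  · rw [Set.coe_toFinset]; exact c.2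
  · rintro ⟨c, hc⟩ ⟨d, hd⟩ h
    simp only [Subtype.mk.injEq, Set.toFinset_inj] at h
    exact Subtype.ext (ConnectedComponent.supp_injective h)
  · rintro ⟨S, hS, ⟨e⟩⟩
    have hc : (G.induce (S : Set V)).Connected := e.connected_iff.2 hH
    obtain ⟨v⟩ := hc.nonempty
    have hsupp : (G.connectedComponentMk v.1).supp = (S : Set V) := by
      have hcl : ∀ a b, G.Adj ((Embedding.induce (G := G) (S : Set V)) a) b →
          ∃ a', (Embedding.induce (G := G) (S : Set V)) a' = b := by
        intro a b hab
        exact ⟨⟨b, hS a.1 a.2 b hab⟩, rfl⟩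
      have := aux_supp_map (Embedding.induce (G := G) (S : Set V)) hcl
        ((G.induce (S : Set V)).connectedComponentMk v)
      have h2 : ((G.induce (S : Set V)).connectedComponentMk v).supp = Set.univ := by
        ext w
        have := hc.preconnected.subsingleton_connectedComponent
        simp only [Set.mem_univ, ConnectedComponent.mem_supp_iff, iff_true]
        exact Subsingleton.elim _ _
      rw [h2] at this
      refine Eq.trans this ?_
      ext y
      simp
    refine ⟨⟨G.connectedComponentMk v.1, ?_⟩, ?_⟩
    · rw [hsupp]; exact ⟨e⟩
    · apply Subtype.ext
      simp [hsupp]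

end Components

section Analysis

open Finset

lemma aux_b_large (b : ℕ → ℕ → ℝ) (h : ℕ) (l : ℝ)
    (hb0 : ∀ n k, n < h → b n (k + 1) = 0)
    (hb1 : ∀ n k : ℕ, ((k : ℝ) + 1) * b (n + h) (k + 1) = l * b n k)
    (j : ℕ) : ∀ n m, n < j * h → j ≤ m → b n m = 0 := by
  induction j with
  | zero => intro n m hn; simp at hn
  | succ j ih =>
    intro n m hn hm
    obtain ⟨m, rfl⟩ : ∃ m', m = m' + 1 := ⟨m - 1, by omega⟩
    by_cases hnh : n < h
    · exact hb0 n m hnh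
    · obtain ⟨n, rfl⟩ : ∃ n', n = n' + h := ⟨n - h, by omega⟩
      have h1 := hb1 n m
      rw [ih n m (by rw [add_mul] at hn; omega) (by omega), mul_zero] at h1
      have : (m : ℝ) + 1 ≠ 0 := by positivity
      exact (mul_eq_zero.1 h1).resolve_left this

lemma aux_b_choose (b : ℕ → ℕ → ℝ) (h : ℕ) (l : ℝ)
    (hb1 : ∀ n k : ℕ, ((k : ℝ) + 1) * b (n + h) (k + 1) = l * b n k)
    (j : ℕ) : ∀ n k, ((k + j).choose j : ℝ) * b (n + j * h) (k + j)
      = l ^ j / (j.factorial : ℝ) * b n k := by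
  induction j with
  | zero => intro n k; simp
  | succ j ih =>
    intro n k
    have h1 := hb1 (n + j * h) (k + j)
    have h2 := ih n k
    have h3 : (((k + j + 1).choose (j + 1) : ℕ) : ℝ) * (j + 1)
        = ((k + j : ℕ) + 1) * ((k + j).choose j : ℕ) := by
      have := Nat.add_one_mul_choose_eq (k + j) j
      exact_mod_cast this.symm
    have h4 : n + (j + 1) * h = n + j * h + h := by ring
    rw [h4, ← add_assoc, Nat.factorial_succ]
    have hj : ((j : ℝ) + 1) ≠ 0 := by positivity
    have hf : (j.factorial : ℝ) ≠ 0 := by positivity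
    apply mul_left_cancel₀ hj
    calc ((j : ℝ) + 1) * (((k + j + 1).choose (j + 1) : ℕ) * b (n + j * h + h) (k + j + 1))
        = ((((k + j + 1).choose (j + 1) : ℕ) : ℝ) * (j + 1)) * b (n + j * h + h) (k + j + 1) := by
          ring
      _ = ((k + j).choose j : ℕ) * (((k + j : ℕ) + 1) * b (n + j * h + h) (k + j + 1)) := by
          rw [h3]; ring
      _ = l * (((k + j).choose j : ℕ) * b (n + j * h) (k + j)) := by
          rw [h1]; ring
      _ = _ := by
          rw [h2]; push_cast; field_simp; ring

lemma aux_alt_sum (m N : ℕ) (hm : m ≤ N) :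
    ∑ j ∈ range (N + 1), (-1 : ℝ) ^ j * (m.choose j : ℝ) = if m = 0 then 1 else 0 := by
  have h1 : ∑ j ∈ range (N + 1), (-1 : ℝ) ^ j * (m.choose j : ℝ)
      = ∑ j ∈ range (m + 1), (-1 : ℝ) ^ j * (m.choose j : ℝ) := by
    symm
    apply sum_subset
    · intro x; simp; omega
    · intro x _ hx
      rw [Nat.choose_eq_zero_of_lt (by simpa using hx)]; simp
  rw [h1]
  have := Int.alternating_sum_range_choose (n := m)
  exact_mod_cast this

/-- inversion formula -/
lemma aux_inversion (b : ℕ → ℕ → ℝ) (g : ℕ → ℝ) (h : ℕ) (hh : 1 ≤ h) (l : ℝ)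
    (hb0 : ∀ n k, n < h → b n (k + 1) = 0)
    (hb1 : ∀ n k : ℕ, ((k : ℝ) + 1) * b (n + h) (k + 1) = l * b n k)
    (hg : ∀ n, g n = ∑ k ∈ range (n + 1), b n k) (n : ℕ) :
    b n 0 = ∑ j ∈ range (n + 1),
      (-l) ^ j / (j.factorial : ℝ) * (if j * h ≤ n then g (n - j * h) else 0) := by
  have hS : ∀ j, ∑ m ∈ range (n + 1), (m.choose j : ℝ) * b n m
      = l ^ j / (j.factorial : ℝ) * (if j * h ≤ n then g (n - j * h) else 0) := by
    intro j
    split_ifs with hj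
    · obtain ⟨n', rfl⟩ : ∃ n', n = n' + j * h := ⟨n - j * h, by omega⟩
      rw [Nat.add_sub_cancel, hg, mul_sum]
      simp_rw [← aux_b_choose b h l hb1 j n']
      have hjh : j ≤ j * h := Nat.le_mul_of_pos_right _ hh
      have : ∑ k ∈ range (n' + 1), ((k + j).choose j : ℝ) * b (n' + j * h) (k + j)
        = ∑ m ∈ Ico j (n' + 1 + j), (m.choose j : ℝ) * b (n' + j * h) m := by
        rw [sum_Ico_eq_sum_range]
        simp [add_comm]
      rw [this]
      symm
      apply sum_subset
      · intro x; simp; omega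
      · intro x hx hx2
        simp only [mem_range, mem_Ico, not_and, not_lt] at hx hx2
        by_cases hxj : j ≤ x
        · have := aux_b_large b h l hb0 hb1 x (n' + j * h) x (by
            have h3 := hx2 hxj
            obtain ⟨y, rfl⟩ : ∃ y, x = j + (n' + 1) + y := ⟨x - (j + (n' + 1)), by omega⟩
            nlinarith) le_rfl
          rw [this, mul_zero]
        · rw [Nat.choose_eq_zero_of_lt (by omega)]; simp
    · rw [mul_zero]
      apply sum_eq_zero
      intro m _
      by_cases hm : j ≤ m
      · rw [aux_b_large b h l hb0 hb1 j n m (by omega) hm, mul_zero]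
      · rw [Nat.choose_eq_zero_of_lt (by omega)]; simp
  have h2 : ∀ j, (-l) ^ j / (j.factorial : ℝ) * (if j * h ≤ n then g (n - j * h) else 0)
      = ∑ m ∈ range (n + 1), ((-1) ^ j * (m.choose j : ℝ)) * b n m := by
    intro j
    simp_rw [mul_assoc]
    rw [← mul_sum, hS j, neg_pow]
    ring
  simp_rw [h2]
  rw [sum_comm]
  simp_rw [← sum_mul]
  rw [sum_congr rfl (fun m hm => by rw [aux_alt_sum m n (by simp at hm; omega)])]
  simp

lemma aux_ratio (a : ℕ → ℝ) (ha : ∀ n, 0 < a n) (r : ℝ)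
    (hr : Tendsto (fun n => a n / a (n + 1)) atTop (𝓝 r)) (d : ℕ) :
    Tendsto (fun n => a n / a (n + d)) atTop (𝓝 (r ^ d)) := by
  induction d with
  | zero => simp [div_self (ha _).ne']
  | succ d ih =>
    have h1 := ih.mul (hr.comp (tendsto_add_atTop_nat d))
    rw [pow_succ]
    refine h1.congr fun n => ?_
    have := (ha (n + d)).ne'
    have := (ha (n + d + 1)).ne'
    simp only [Function.comp, ← add_assoc]
    field_simp

lemma aux_analytic (b : ℕ → ℕ → ℝ) (g a : ℕ → ℝ) (h : ℕ) (hh : 1 ≤ h) (l r p : ℝ)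
    (hl : 0 ≤ l)
    (hb0 : ∀ n k, n < h → b n (k + 1) = 0)
    (hb1 : ∀ n k : ℕ, ((k : ℝ) + 1) * b (n + h) (k + 1) = l * b n k)
    (hg : ∀ n, g n = ∑ k ∈ range (n + 1), b n k)
    (ha : ∀ n, 0 < a n) (hmono : Monotone a)
    (hr : Tendsto (fun n => a n / a (n + 1)) atTop (𝓝 r))
    (hg0 : ∀ n, 0 ≤ g n) (hga : ∀ n, g n ≤ a n)
    (hp : Tendsto (fun n => g n / a n) atTop (𝓝 p)) (k : ℕ) :
    Tendsto (fun n => b n k / a n) atTop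
      (𝓝 (p * ((l * r ^ h) ^ k / k.factorial * Real.exp (-(l * r ^ h))))) := by
  have hshift : ∀ d, Tendsto (fun n => g n / a (n + d)) atTop (𝓝 (p * r ^ d)) := by
    intro d
    refine (hp.mul (aux_ratio a ha r hr d)).congr fun n => ?_
    have := (ha n).ne'
    have := (ha (n + d)).ne'
    field_simp
  have h0 : Tendsto (fun n => b n 0 / a n) atTop (𝓝 (p * Real.exp (-(l * r ^ h)))) := by
    set f : ℕ → ℕ → ℝ := fun n j =>
      (-l) ^ j / (j.factorial : ℝ) * (if j * h ≤ n then g (n - j * h) else 0) / a n with hf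
    have hfb : ∀ n, b n 0 / a n = ∑' j, f n j := by
      intro n
      rw [tsum_eq_sum (s := range (n + 1)), aux_inversion b g h hh l hb0 hb1 hg n, sum_div]
      intro j hj
      have hjn : n < j := by simpa using hj
      have : j ≤ j * h := Nat.le_mul_of_pos_right _ hh
      simp only [hf]
      rw [if_neg (by omega)]; simp
    simp_rw [hfb]
    have hexp : p * Real.exp (-(l * r ^ h))
        = ∑' j : ℕ, (-l) ^ j / (j.factorial : ℝ) * (p * r ^ (j * h)) := by
      rw [Real.exp_eq_exp_ℝ, NormedSpace.exp_eq_tsum_div, ← tsum_mul_left]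
      congr 1
      ext j
      rw [neg_pow (l * r ^ h), mul_pow, neg_pow l, mul_comm j h, pow_mul]
      ring
    rw [hexp]
    refine tendsto_tsum_of_dominated_convergence (Real.summable_pow_div_factorial l) ?_ ?_
    · intro j
      have := (hshift (j * h)).const_mul ((-l) ^ j / (j.factorial : ℝ))
      rw [← tendsto_add_atTop_iff_nat (j * h)]
      refine this.congr fun n => ?_
      simp only [hf]
      rw [if_pos (by omega), Nat.add_sub_cancel, mul_div_assoc]
    · refine Eventually.of_forall fun n j => ?_
      simp only [hf]
      rw [mul_div_assoc, norm_mul, norm_div, norm_pow, norm_neg, Real.norm_of_nonneg hl,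
        Real.norm_of_nonneg (by positivity : (0 : ℝ) ≤ (j.factorial : ℝ))]
      apply mul_le_of_le_one_right (by positivity)
      split_ifs with hj
      · rw [Real.norm_of_nonneg (div_nonneg (hg0 _) (ha _).le), div_le_one (ha _)]
        exact (hga _).trans (hmono (by omega))
      · simp
  have hbk : ∀ n, b (n + k * h) k = l ^ k / (k.factorial : ℝ) * b n 0 := by
    intro n
    have := aux_b_choose b h l hb1 k n 0
    simpa using this
  rw [← tendsto_add_atTop_iff_nat (k * h)]
  have h3 := (h0.mul (aux_ratio a ha r hr (k * h))).const_mul (l ^ k / (k.factorial : ℝ))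
  have e : l ^ k / (k.factorial : ℝ) * (p * Real.exp (-(l * r ^ h)) * r ^ (k * h))
     = p * ((l * r ^ h) ^ k / k.factorial * Real.exp (-(l * r ^ h))) := by
    rw [mul_pow, mul_comm k h, pow_mul]; ring
  rw [← e]
  refine h3.congr fun n => ?_
  rw [hbk]
  have := (ha n).ne'
  have := (ha (n + k * h)).ne'
  field_simp

end Analysis

section Counting

open SimpleGraph

/-- being a component of `G` with vertex set `S` isomorphic to (connected) `H` -/
def AuxIsComp {V U : Type} (G : SimpleGraph V) (H : SimpleGraph U) (S : Finset V) : Prop :=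
  (∀ a ∈ S, ∀ b, G.Adj a b → b ∈ S) ∧ Nonempty (G.induce (S : Set V) ≃g H)

lemma aux_exists_equiv (n h : ℕ) (S : Finset (Fin (n + h))) (hS : S.card = h) :
    ∃ e : Fin h ⊕ Fin n ≃ Fin (n + h), ∀ x, e x ∈ S ↔ ∃ i, x = Sum.inl i := by
  classical
  have h1 : Fintype.card {x // x ∈ S} = h := by simpa using hS
  have h2 : Fintype.card {x // ¬ x ∈ S} = n := by
    rw [Fintype.card_subtype_compl]; simp [hS]
  let e1 := (Fintype.equivFinOfCardEq h1).symm
  let e2 := (Fintype.equivFinOfCardEq h2).symm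
  refine ⟨(Equiv.sumCongr e1 e2).trans (Equiv.sumCompl (fun x => x ∈ S)), ?_⟩
  rintro (x | x)
  · simp
  · simpa using (e2 x).2

lemma aux_sum_inj {V W : Type} {A A' : SimpleGraph V} {B B' : SimpleGraph W}
    (h : A ⊕g B = A' ⊕g B') : A = A' ∧ B = B' := by
  constructor
  · ext a b
    rw [← sum_adj_inl (G := A) (H := B), h, sum_adj_inl]
  · ext a b
    rw [← sum_adj_inr (G := A) (H := B), h, sum_adj_inr]

lemma aux_count_S (D : GraphClassOn) (hIso : ClassIsoInvariant D) {U : Type}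
    (H : SimpleGraph U) (q : Prop) (h : ℕ)
    (hD : ∀ (n : ℕ) (A : SimpleGraph (Fin h)) (B : SimpleGraph (Fin n)), Nonempty (A ≃g H) →
      (D (Fin h ⊕ Fin n) (A ⊕g B) ↔ q ∧ D (Fin n) B))
    (hX : ∀ (n : ℕ) (A : SimpleGraph (Fin h)) (B : SimpleGraph (Fin n)), Nonempty (A ≃g H) →
      numComponentsIso (A ⊕g B) H = numComponentsIso B H + 1)
    (n k : ℕ) (S : Finset (Fin (n + h))) (hS : S.card = h) :
    Nat.card {G : SimpleGraph (Fin (n + h)) //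
        (D _ G ∧ numComponentsIso G H = k + 1) ∧ AuxIsComp G H S}
      = Nat.card {A : SimpleGraph (Fin h) // q ∧ Nonempty (A ≃g H)} *
        Nat.card {B : SimpleGraph (Fin n) // D _ B ∧ numComponentsIso B H = k} := by
  classical
  obtain ⟨e, he⟩ := aux_exists_equiv n h S hS
  rw [← Nat.card_prod]
  symm
  have hemb : ∀ G : SimpleGraph (Fin h ⊕ Fin n),
      (S : Set (Fin (n + h))) = ((Iso.map e G).toEmbedding.comp
        (Embedding.comap (⟨Sum.inl, Sum.inl_injective⟩ : Fin h ↪ Fin h ⊕ Fin n) G)) '' Set.univ := by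
    intro G
    ext x
    obtain ⟨y, rfl⟩ := e.surjective x
    simp only [Finset.mem_coe, he, Set.image_univ, Set.mem_range]
    constructor
    · rintro ⟨i, rfl⟩; exact ⟨i, rfl⟩
    · rintro ⟨i, hi⟩; exact ⟨i, (e.injective hi).symm⟩
  have hind : ∀ G : SimpleGraph (Fin h ⊕ Fin n),
      Nonempty ((G.map e).induce (S : Set (Fin (n + h))) ≃g H) ↔
        Nonempty (G.comap Sum.inl ≃g H) := by
    intro G
    rw [← aux_nonempty_iso_congr H (aux_induce_image _ _ _ (hemb G))]
    exact aux_nonempty_iso_congr H ⟨induceUnivIso _⟩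
  have hcomapA : ∀ (A : SimpleGraph (Fin h)) (B : SimpleGraph (Fin n)),
      (A ⊕g B).comap Sum.inl = A := by
    intro A B; ext a b; simp
  refine Nat.card_congr (Equiv.ofBijective
    (fun p => ⟨(p.1.1 ⊕g p.2.1).map e, ⟨?_, ?_⟩, ?_, ?_⟩) ⟨?_, ?_⟩)
  · rw [← hIso _ _ _ _ ⟨Iso.map e _⟩]
    exact (hD _ _ _ p.1.2.2).2 ⟨p.1.2.1, p.2.2.1⟩
  · rw [← aux_num_iso (Iso.map e _), hX _ _ _ p.1.2.2, p.2.2.2]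
  · intro a ha b hab
    obtain ⟨a, rfl⟩ := e.surjective a
    obtain ⟨b, rfl⟩ := e.surjective b
    rw [he] at ha ⊢
    obtain ⟨i, rfl⟩ := ha
    have hab' : (p.1.1 ⊕g p.2.1).Adj (Sum.inl i) b := (Iso.map e _).map_adj_iff.1 hab
    rcases b with b | b
    · exact ⟨b, rfl⟩
    · simp at hab'
  · rw [hind, hcomapA]; exact p.1.2.2
  · rintro ⟨⟨A, hA⟩, ⟨B, hB⟩⟩ ⟨⟨A', hA'⟩, ⟨B', hB'⟩⟩ hEq
    have h1 := (SimpleGraph.map_injective e.toEmbedding) (Subtype.ext_iff.1 hEq)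
    obtain ⟨rfl, rfl⟩ := aux_sum_inj h1
    rfl
  · rintro ⟨G, ⟨hG1, hG2⟩, hG3, hG4⟩
    set G' : SimpleGraph (Fin h ⊕ Fin n) := G.comap e with hG'
    have hGG : G'.map e = G := by
      ext a b
      obtain ⟨a, rfl⟩ := e.surjective a
      obtain ⟨b, rfl⟩ := e.surjective b
      exact (Iso.map e G').map_adj_iff
    have hcross : ∀ i j, ¬ G'.Adj (Sum.inl i) (Sum.inr j) := by
      intro i j hij
      have := hG3 (e (Sum.inl i)) ((he _).2 ⟨i, rfl⟩) (e (Sum.inr j)) hij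
      rw [he] at this
      obtain ⟨_, h⟩ := this
      cases h
    have hsum : (G'.comap Sum.inl) ⊕g (G'.comap Sum.inr) = G' := by
      ext a b
      rcases a with a | a <;> rcases b with b | b
      · simp
      · simpa using hcross a b
      · simpa using fun hh => hcross b a hh.symm
      · simp
    have hA : Nonempty (G'.comap Sum.inl ≃g H) := by
      rw [← hind, hGG]; exact hG4
    have i1 : D _ G' := by
      rw [hIso _ _ _ _ ⟨Iso.map e G'⟩]
      have : G'.map e = G := hGG
      rw [this]; exact hG1
    have i2 : numComponentsIso G' H = k + 1 := by
      rw [aux_num_iso (Iso.map e G'), hGG]; exact hG2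
    rw [← hsum, hD _ _ _ hA] at i1
    rw [← hsum, hX _ _ _ hA] at i2
    refine ⟨⟨⟨G'.comap Sum.inl, i1.1, hA⟩, ⟨G'.comap Sum.inr, i1.2, by omega⟩⟩, ?_⟩
    apply Subtype.ext
    change ((G'.comap Sum.inl) ⊕g (G'.comap Sum.inr)).map e = G
    rw [hsum, hGG]

lemma aux_isComp_card {N : ℕ} {U : Type} {G : SimpleGraph (Fin N)} {H : SimpleGraph U}
    {S : Finset (Fin N)} (hc : AuxIsComp G H S) : S.card = Nat.card U := by
  obtain ⟨e⟩ := hc.2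
  have := Nat.card_congr e.toEquiv
  simpa using this

lemma aux_count_small (D : GraphClassOn) {U : Type}
    (H : SimpleGraph U) (hH : H.Connected) (n k : ℕ) (hn : n < Nat.card U) :
    Nat.card {G : SimpleGraph (Fin n) // D _ G ∧ numComponentsIso G H = k + 1} = 0 := by
  rw [Nat.card_eq_zero]
  left
  refine ⟨fun ⟨G, _, hG⟩ => ?_⟩
  rw [aux_num_sets G hH] at hG
  have : Nat.card {S : Finset (Fin n) // (∀ a ∈ S, ∀ b, G.Adj a b → b ∈ S) ∧
    Nonempty (G.induce (S : Set (Fin n)) ≃g H)} ≠ 0 := by omega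
  obtain ⟨⟨S, hS⟩⟩ := (Nat.card_ne_zero.1 this).1
  have h1 := aux_isComp_card (G := G) hS
  have h2 := S.card_le_univ
  simp at h2
  omega

lemma aux_count (D : GraphClassOn) (hIso : ClassIsoInvariant D) {U : Type}
    (H : SimpleGraph U) (hH : H.Connected) (q : Prop) (h : ℕ) (hU : Nat.card U = h)
    (hD : ∀ (n : ℕ) (A : SimpleGraph (Fin h)) (B : SimpleGraph (Fin n)), Nonempty (A ≃g H) →
      (D (Fin h ⊕ Fin n) (A ⊕g B) ↔ q ∧ D (Fin n) B))
    (hX : ∀ (n : ℕ) (A : SimpleGraph (Fin h)) (B : SimpleGraph (Fin n)), Nonempty (A ≃g H) →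
      numComponentsIso (A ⊕g B) H = numComponentsIso B H + 1)
    (n k : ℕ) :
    (k + 1) * Nat.card {G : SimpleGraph (Fin (n + h)) // D _ G ∧ numComponentsIso G H = k + 1}
      = (n + h).choose h * (Nat.card {A : SimpleGraph (Fin h) // q ∧ Nonempty (A ≃g H)} *
        Nat.card {B : SimpleGraph (Fin n) // D _ B ∧ numComponentsIso B H = k}) := by
  classical
  set R := Nat.card {A : SimpleGraph (Fin h) // q ∧ Nonempty (A ≃g H)} *
        Nat.card {B : SimpleGraph (Fin n) // D _ B ∧ numComponentsIso B H = k} with hR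
  have e1 : Nat.card (Σ G : {G : SimpleGraph (Fin (n + h)) // D _ G ∧ numComponentsIso G H = k + 1},
      {S : Finset (Fin (n + h)) // AuxIsComp G.1 H S})
      = (k + 1) * Nat.card {G : SimpleGraph (Fin (n + h)) //
          D _ G ∧ numComponentsIso G H = k + 1} := by
    have : Fintype {G : SimpleGraph (Fin (n + h)) // D _ G ∧ numComponentsIso G H = k + 1} :=
      Fintype.ofFinite _
    rw [Nat.card_sigma, Finset.sum_congr rfl (g := fun _ => k + 1)]
    · simp [mul_comm]
    · intro G _
      exact (aux_num_sets G.1 hH).symm.trans G.2.2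
  have e2 : Nat.card (Σ S : Finset (Fin (n + h)), {G : SimpleGraph (Fin (n + h)) //
        (D _ G ∧ numComponentsIso G H = k + 1) ∧ AuxIsComp G H S})
      = (n + h).choose h * R := by
    rw [Nat.card_sigma]
    have : ∀ S : Finset (Fin (n + h)), Nat.card {G : SimpleGraph (Fin (n + h)) //
        (D _ G ∧ numComponentsIso G H = k + 1) ∧ AuxIsComp G H S}
        = if S ∈ Finset.powersetCard h Finset.univ then R else 0 := by
      intro S
      split_ifs with hS
      · exact aux_count_S D hIso H q h hD hX n k S (by simpa using hS)
      · rw [Nat.card_eq_zero]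
        left
        refine ⟨fun G => hS ?_⟩
        simpa [hU] using aux_isComp_card G.2.2
    simp_rw [this]
    rw [Finset.sum_ite_mem]
    simp
  rw [← e1, ← e2]
  refine Nat.card_congr ⟨fun x => ⟨x.2.1, x.1.1, x.1.2, x.2.2⟩,
    fun x => ⟨⟨x.2.1, x.2.2.1⟩, x.1, x.2.2.2⟩, fun _ => rfl, fun _ => rfl⟩

lemma aux_count_sum (D : GraphClassOn) {U : Type} (H : SimpleGraph U) (n : ℕ) :
    Nat.card {G : SimpleGraph (Fin n) // D _ G} = ∑ k ∈ Finset.range (n + 1),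
      Nat.card {G : SimpleGraph (Fin n) // D _ G ∧ numComponentsIso G H = k} := by
  classical
  have hle : ∀ G : SimpleGraph (Fin n), numComponentsIso G H < n + 1 := by
    intro G
    have h1 : numComponentsIso G H ≤ Nat.card G.ConnectedComponent :=
      Finite.card_subtype_le _
    have h2 : Nat.card G.ConnectedComponent ≤ Nat.card (Fin n) :=
      Nat.card_le_card_of_surjective G.connectedComponentMk (fun c => c.exists_rep)
    rw [Nat.card_fin] at h2
    omega
  simp only [Nat.card_eq_fintype_card, Fintype.card_subtype]
  rw [Finset.card_eq_sum_card_fiberwise (f := fun G => numComponentsIso G H)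
    (t := Finset.range (n + 1))]
  · simp only [Finset.filter_filter]
  · intro G _
    simpa using hle G

/-- `c_{n+1} ≥ (n+1) c_n` -/
lemma aux_growth (C : GraphClassOn) (hIso : ClassIsoInvariant C) (hAdd : ClassAddable C)
    (h1 : ∃ G : SimpleGraph (Fin 1), C (Fin 1) G) (n : ℕ) :
    (n + 1) * classCount C n ≤ classCount C (n + 1) := by
  obtain ⟨G1, hG1⟩ := h1
  have hsum : ∀ G : SimpleGraph (Fin n), C _ G → C (Fin n ⊕ Fin 1) (G ⊕g G1) :=
    fun G hG => (aux_class_sum C hIso hAdd.1 G G1).2 ⟨hG, hG1⟩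
  have hcount : classCount C (n + 1) = Nat.card {G : SimpleGraph (Fin n ⊕ Fin 1) // C _ G} := by
    unfold classCount
    symm
    refine Nat.card_congr ((finSumFinEquiv.simpleGraph).subtypeEquiv fun G => ?_)
    exact hIso _ _ _ _ ⟨(Iso.comap finSumFinEquiv.symm G).symm⟩
  have hadj : ∀ (G : SimpleGraph (Fin n)) (v : Fin n ⊕ Fin 1) (a b : Fin n),
      ((G ⊕g G1) ⊔ fromEdgeSet {s(Sum.inr 0, v)}).Adj (Sum.inl a) (Sum.inl b) ↔ G.Adj a b := by
    intro G v a b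
    simp
  have hadj2 : ∀ (G : SimpleGraph (Fin n)) (v : Fin n ⊕ Fin 1) (b : Fin n),
      ((G ⊕g G1) ⊔ fromEdgeSet {s(Sum.inr 0, v)}).Adj (Sum.inr 0) (Sum.inl b) ↔
        v = Sum.inl b := by
    intro G v b
    simp
    aesop
  have hcard : (n + 1) * classCount C n
      = Nat.card ((Fin n ⊕ Fin 1) × {G : SimpleGraph (Fin n) // C _ G}) := by
    rw [Nat.card_prod]; simp [classCount]
  rw [hcard, hcount]
  refine Nat.card_le_card_of_injective
    (fun p => ⟨(p.2.1 ⊕g G1) ⊔ fromEdgeSet {s(Sum.inr 0, p.1)}, ?_⟩) ?_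
  · obtain ⟨v, G, hG⟩ := p
    rcases v with v | v
    · exact hAdd.2 _ _ _ _ (hsum G hG)
        (fun hr => not_reachable_sum_inl_inr _ _ hr.symm)
    · have : (fromEdgeSet {s(Sum.inr 0, Sum.inr v)} : SimpleGraph (Fin n ⊕ Fin 1)) = ⊥ := by
        have : v = 0 := Subsingleton.elim _ _
        subst this
        ext a b
        simp
        aesop
      simp only [this, sup_bot_eq]
      exact hsum G hG
  · rintro ⟨v, G, hG⟩ ⟨v', G', hG'⟩ hEq
    have hEq' := Subtype.ext_iff.1 hEq
    simp only at hEq'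
    have hGG : G = G' := by
      ext a b
      rw [← hadj G v, hEq', hadj]
    have hvv : ∀ b, v = Sum.inl b ↔ v' = Sum.inl b := by
      intro b
      rw [← hadj2 G v b, hEq', hadj2]
    have : v = v' := by
      rcases v with v | v
      · exact ((hvv v).1 rfl).symm
      · rcases v' with v' | v'
        · exact (hvv v').2 rfl
        · exact congrArg _ (Subsingleton.elim _ _)
    subst hGG this
    rfl

end Counting

section Main

open SimpleGraph

/-- limiting Poisson probability -/
noncomputable def auxPois {U : Type} (q : Prop) (H : SimpleGraph U) (r : ℝ) (k : ℕ) : ℝ :=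
  (((Nat.card {A : SimpleGraph (Fin (Nat.card U)) // q ∧ Nonempty (A ≃g H)} : ℝ) /
      ((Nat.card U).factorial : ℝ)) * r ^ (Nat.card U)) ^ k / k.factorial *
    Real.exp (-(((Nat.card {A : SimpleGraph (Fin (Nat.card U)) // q ∧ Nonempty (A ≃g H)} : ℝ) /
      ((Nat.card U).factorial : ℝ)) * r ^ (Nat.card U)))

lemma aux_main (C : GraphClassOn) (hpos : ∀ n, 0 < classCount C n)
    (hgrow : ∀ n, (n + 1) * classCount C n ≤ classCount C (n + 1)) (r : ℝ)
    (hr : Tendsto (fun n : ℕ => ((n : ℝ) + 1) * classCount C n / classCount C (n + 1))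
      atTop (𝓝 r))
    (D : GraphClassOn) (hIso : ClassIsoInvariant D)
    (hsub : ∀ n (G : SimpleGraph (Fin n)), D _ G → C _ G)
    {U : Type} [Finite U] (H : SimpleGraph U) (hH : H.Connected) (q : Prop)
    (hD : ∀ (n : ℕ) (A : SimpleGraph (Fin (Nat.card U))) (B : SimpleGraph (Fin n)),
      Nonempty (A ≃g H) → (D (Fin (Nat.card U) ⊕ Fin n) (A ⊕g B) ↔ q ∧ D (Fin n) B))
    (p : ℝ)
    (hp : Tendsto (fun n : ℕ => (Nat.card {G : SimpleGraph (Fin n) // D _ G} : ℝ) /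
      classCount C n) atTop (𝓝 p)) (k : ℕ) :
    Tendsto (fun n : ℕ => (Nat.card {G : SimpleGraph (Fin n) //
        D _ G ∧ numComponentsIso G H = k} : ℝ) / classCount C n) atTop
      (𝓝 (p * auxPois q H r k)) := by
  have hX : ∀ (n : ℕ) (A : SimpleGraph (Fin (Nat.card U))) (B : SimpleGraph (Fin n)),
      Nonempty (A ≃g H) → numComponentsIso (A ⊕g B) H = numComponentsIso B H + 1 := by
    intro n A B hA
    have hAc : A.Connected := by
      obtain ⟨e⟩ := hA
      exact e.connected_iff.2 hH
    rw [aux_num_sum, aux_num_self hAc hA, add_comm]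
  have hU : 1 ≤ Nat.card U := by
    have := hH.nonempty
    exact Nat.card_pos
  have hfac : ∀ n : ℕ, (n.factorial : ℝ) ≠ 0 := fun n => by positivity
  have key := aux_analytic
    (fun n k => (Nat.card {G : SimpleGraph (Fin n) //
        D _ G ∧ numComponentsIso G H = k} : ℝ) / n.factorial)
    (fun n => (Nat.card {G : SimpleGraph (Fin n) // D _ G} : ℝ) / n.factorial)
    (fun n => (classCount C n : ℝ) / n.factorial) (Nat.card U) hU
    ((Nat.card {A : SimpleGraph (Fin (Nat.card U)) // q ∧ Nonempty (A ≃g H)} : ℝ) /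
      ((Nat.card U).factorial : ℝ)) r p (by positivity) ?_ ?_ ?_ ?_ ?_ ?_ ?_ ?_ ?_ k
  · refine key.congr fun n => ?_
    exact div_div_div_cancel_right₀ (hfac n) _ _
  · intro n k hn
    rw [aux_count_small D H hH n k hn]
    simp
  · intro n k
    have h1 := aux_count D hIso H hH q (Nat.card U) rfl hD hX n k
    have h2 := Nat.add_choose_mul_factorial_mul_factorial n (Nat.card U)
    have h2' : (((n + Nat.card U).choose (Nat.card U) : ℕ) : ℝ) * n.factorial * (Nat.card U).factorial
      = (n + Nat.card U).factorial := by exact_mod_cast h2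
    have h1' : ((k : ℝ) + 1) * (Nat.card {G : SimpleGraph (Fin (n + Nat.card U)) //
        D _ G ∧ numComponentsIso G H = k + 1} : ℝ)
      = (((n + Nat.card U).choose (Nat.card U) : ℕ) : ℝ) *
        ((Nat.card {A : SimpleGraph (Fin (Nat.card U)) // q ∧ Nonempty (A ≃g H)} : ℝ) *
        (Nat.card {B : SimpleGraph (Fin n) // D _ B ∧ numComponentsIso B H = k} : ℝ)) := by
      exact_mod_cast h1
    rw [mul_div_assoc', h1', ← h2']
    have hc : (((n + Nat.card U).choose (Nat.card U) : ℕ) : ℝ) ≠ 0 := by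
      have : 0 < (n + Nat.card U).choose (Nat.card U) := Nat.choose_pos (by omega)
      positivity
    have := hfac n
    have := hfac (Nat.card U)
    generalize (((n + Nat.card U).choose (Nat.card U) : ℕ) : ℝ) = x at *
    field_simp
  · intro n
    rw [aux_count_sum D H n, ← Finset.sum_div]
    push_cast
    rfl
  · intro n
    have := hpos n
    positivity
  · apply monotone_nat_of_le_succ
    intro n
    rw [div_le_div_iff₀ (by positivity) (by positivity), Nat.factorial_succ]
    have h1 : ((n : ℝ) + 1) * classCount C n ≤ classCount C (n + 1) := by exact_mod_cast hgrow n
    have h2 : (0 : ℝ) ≤ n.factorial := by positivity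
    push_cast
    nlinarith
  · refine hr.congr fun n => ?_
    rw [Nat.factorial_succ]
    push_cast
    have := hfac n
    have : (classCount C (n + 1) : ℝ) ≠ 0 := by exact_mod_cast (hpos (n + 1)).ne'
    field_simp
  · intro n
    positivity
  · intro n
    gcongr
    unfold classCount
    exact Nat.card_le_card_of_injective (fun G => ⟨G.1, hsub _ _ G.2⟩)
      (fun a b h => by
        have h' := Subtype.ext_iff.1 h
        exact Subtype.ext h')
  · refine hp.congr fun n => ?_
    exact (div_div_div_cancel_right₀ (hfac n) _ _).symm

end Main

/-- For a smooth addable class and non-isomorphic connected graphs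
`H₁, H₂`, the events of having exactly `k₁` components isomorphic to `H₁` and exactly
`k₂` components isomorphic to `H₂` are asymptotically independent. -/
theorem components_iso_asymptotically_independent
    (C : GraphClassOn) (hIso : ClassIsoInvariant C) (hAdd : ClassAddable C)
    (hSmooth : ClassSmooth C)
    (hne : ∀ n : ℕ, 1 ≤ n → ∃ G : SimpleGraph (Fin n), C (Fin n) G)
    (V₁ V₂ : Type) [Finite V₁] [Finite V₂]
    (H₁ : SimpleGraph V₁) (H₂ : SimpleGraph V₂)
    (hH₁ : H₁.Connected) (hH₂ : H₂.Connected)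
    (hNonIso : ¬Nonempty (H₁ ≃g H₂)) (k₁ k₂ : ℕ) :
    ∃ p₁ p₂ : ℝ,
      Tendsto (fun n : ℕ => classProb C n (fun G => numComponentsIso G H₁ = k₁))
        atTop (𝓝 p₁) ∧
      Tendsto (fun n : ℕ => classProb C n (fun G => numComponentsIso G H₂ = k₂))
        atTop (𝓝 p₂) ∧
      Tendsto (fun n : ℕ => classProb C n
          (fun G => numComponentsIso G H₁ = k₁ ∧ numComponentsIso G H₂ = k₂))
        atTop (𝓝 (p₁ * p₂)) := by
  classical
  have hgrow := aux_growth C hIso hAdd (hne 1 le_rfl)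
  have hpos : ∀ n, 0 < classCount C n := by
    intro n
    induction n with
    | zero =>
      unfold classCount
      have hC : C (Fin 0) ⊥ := by
        rw [hAdd.1]
        intro c
        obtain ⟨v, _⟩ := c.nonempty_supp
        exact v.elim0
      have : Nonempty {G : SimpleGraph (Fin 0) // C (Fin 0) G} := ⟨⟨⊥, hC⟩⟩
      exact Nat.card_pos
    | succ n ih => exact lt_of_lt_of_le (Nat.mul_pos n.succ_pos ih) (hgrow n)
  have hposR : ∀ n, (classCount C n : ℝ) ≠ 0 := fun n => by exact_mod_cast (hpos n).ne'
  obtain ⟨γ, hγ⟩ := hSmooth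
  have hγ' : Tendsto (fun n : ℕ => (classCount C (n + 1) : ℝ) / (((n : ℝ) + 1) * classCount C n))
      atTop (𝓝 γ) := by
    refine ((tendsto_add_atTop_iff_nat 1).2 hγ).congr fun n => ?_
    simp
  have hγ1 : 1 ≤ γ := by
    refine ge_of_tendsto' hγ' fun n => ?_
    have h1 : ((n : ℝ) + 1) * classCount C n ≤ classCount C (n + 1) := by exact_mod_cast hgrow n
    have h2 : (0 : ℝ) < classCount C n := by exact_mod_cast hpos n
    rw [le_div_iff₀ (by positivity)]
    linarith
  have hr : Tendsto (fun n : ℕ => ((n : ℝ) + 1) * classCount C n / classCount C (n + 1))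
      atTop (𝓝 γ⁻¹) := by
    refine (hγ'.inv₀ (by linarith)).congr fun n => ?_
    rw [inv_div]
  have hone : Tendsto (fun n : ℕ => (Nat.card {G : SimpleGraph (Fin n) // C _ G} : ℝ) /
      classCount C n) atTop (𝓝 1) := by
    refine tendsto_const_nhds.congr fun n => ?_
    exact (div_self (hposR n)).symm
  have hsum : ∀ {U : Type} [Finite U] (H : SimpleGraph U) (n : ℕ)
      (A : SimpleGraph (Fin (Nat.card U))) (B : SimpleGraph (Fin n)),
      Nonempty (A ≃g H) → (C (Fin (Nat.card U) ⊕ Fin n) (SimpleGraph.sum A B) ↔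
        C U H ∧ C (Fin n) B) := by
    intro U _ H n A B hA
    rw [aux_class_sum C hIso hAdd.1, hIso _ _ _ _ hA]
  have m1 := aux_main C hpos hgrow γ⁻¹ hr C hIso (fun _ _ h => h) H₁ hH₁ (C V₁ H₁)
    (hsum H₁) 1 hone k₁
  have m2 := aux_main C hpos hgrow γ⁻¹ hr C hIso (fun _ _ h => h) H₂ hH₂ (C V₂ H₂)
    (hsum H₂) 1 hone k₂
  have m3 := aux_main C hpos hgrow γ⁻¹ hr
    (fun V _ G => C V G ∧ numComponentsIso G H₁ = k₁) ?_ (fun _ _ h => h.1) H₂ hH₂ (C V₂ H₂)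
    ?_ _ m1 k₂
  · refine ⟨_, _, m1, m2, ?_⟩
    rw [one_mul] at m3 ⊢
    rw [one_mul]
    refine m3.congr fun n => ?_
    unfold classProb
    simp only [and_assoc]
  · intro V W _ _ G K hGK
    obtain ⟨e⟩ := hGK
    exact and_congr (hIso _ _ _ _ ⟨e⟩) (by rw [aux_num_iso e])
  · intro n A B hA
    have hAc : A.Connected := by
      obtain ⟨e⟩ := hA
      exact e.connected_iff.2 hH₂
    have hA1 : ¬ Nonempty (A ≃g H₁) := by
      rintro ⟨f⟩
      obtain ⟨e⟩ := hA
      exact hNonIso ⟨f.symm.trans e⟩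
    rw [hsum H₂ n A B hA, aux_num_sum, aux_num_other hAc hA1, zero_add, and_assoc]
end

section
/- Let f_n be the number of acyclic simple graphs (forests) on the vertex set Fin n. Then limsup_{n→∞} (f_n/n!)^{1/n} = e; that is, the growth constant of the class of forests equals e. -/
open Filter Topology FirstOrder

/-- `FReach p v s`: iterating the parent map `p` from `v` ends at the root `s`. -/
inductive FReach {n : ℕ} (p : Fin n → Fin n) : Fin n → Fin n → Prop
  | base (s : Fin n) (h : p s = s) : FReach p s s
  | step (v s : Fin n) (h : FReach p (p v) s) : FReach p v s

lemma FReach.root {n : ℕ} {p : Fin n → Fin n} {v s : Fin n} (h : FReach p v s) : p s = s := by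
  induction h with
  | base s h => exact h
  | step v s h ih => exact ih

lemma FReach.update_ne {n : ℕ} {p : Fin n → Fin n} {v s r u : Fin n} (h : FReach p v s)
    (hr : p r = r) (hsr : s ≠ r) : FReach (Function.update p r u) v s := by
  induction h with
  | base s h => exact FReach.base s (by rw [Function.update_of_ne hsr, h])
  | step v s h ih =>
    by_cases hv : v = r
    · subst hv
      have := ih hsr
      rwa [hr] at this
    · apply FReach.step
      rw [Function.update_of_ne hv]
      exact ih hsr

lemma FReach.update_eq {n : ℕ} {p : Fin n → Fin n} {v s r u t : Fin n} (h : FReach p v t)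
    (ht : t = r) (hr : p r = r) (hu : FReach p u s) (hsr : s ≠ r) :
    FReach (Function.update p r u) v s := by
  induction h with
  | base t h =>
    subst ht
    apply FReach.step
    rw [Function.update_self]
    exact hu.update_ne hr hsr
  | step v t h ih =>
    by_cases hv : v = r
    · subst hv
      have := ih ht
      rwa [hr] at this
    · apply FReach.step
      rw [Function.update_of_ne hv]
      exact ih ht

lemma FReach.no_two_cycle {n : ℕ} {p : Fin n → Fin n} {v s : Fin n} (h : FReach p v s)
    (h2 : p (p v) = v) : p v = v := by
  induction h with
  | base s h => exact h
  | step v s h ih =>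
    have := ih (by rw [h2])
    rw [h2] at this
    exact this.symm

/-- Roots of a parent map. -/
def fRoots {n : ℕ} (p : Fin n → Fin n) : Finset (Fin n) := Finset.univ.filter (fun r => p r = r)

open Classical in
/-- Acyclic parent maps with exactly `m` roots. -/
noncomputable def fB (n m : ℕ) : Finset (Fin n → Fin n) :=
  Finset.univ.filter (fun p => (∀ v, ∃ s, FReach p v s) ∧ (fRoots p).card = m)

lemma fRoots_update {n : ℕ} {p : Fin n → Fin n} {r u : Fin n} (hur : u ≠ r) :
    fRoots (Function.update p r u) = (fRoots p).erase r := by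
  ext x
  simp only [fRoots, Finset.mem_filter, Finset.mem_univ, true_and, Finset.mem_erase]
  by_cases hx : x = r
  · subst hx; simp [hur]
  · simp [Function.update_of_ne hx, hx]

lemma fB_step (n m : ℕ) : n * m * (fB n (m + 1)).card ≤ (n - m) * (fB n m).card := by
  classical
  have hex : ∀ p : Fin n → Fin n, ∃ ρ : Fin n → Fin n, p ∈ fB n (m + 1) → ∀ v, FReach p v (ρ v) := by
    intro p
    by_cases hp : p ∈ fB n (m + 1)
    · have := (Finset.mem_filter.mp hp).2.1
      choose ρ hρ using this
      exact ⟨ρ, fun _ => hρ⟩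
    · exact ⟨id, fun h => absurd h hp⟩
  choose ρ hρ using hex
  let S : Finset (Σ _ : (Fin n → Fin n), Σ _ : Fin n, Fin n) :=
    (fB n (m + 1)).sigma (fun p => Finset.univ.sigma (fun u => (fRoots p).erase (ρ p u)))
  let T : Finset (Σ _ : (Fin n → Fin n), Fin n) :=
    (fB n m).sigma (fun q => (fRoots q)ᶜ)
  have hS : S.card = n * m * (fB n (m + 1)).card := by
    simp only [S, Finset.card_sigma]
    rw [Finset.sum_congr rfl (g := fun _ => n * m)]
    · simp [mul_comm]
    · intro p hp
      rw [Finset.sum_congr rfl (g := fun _ => m)]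
      · simp
      · intro u _
        rw [Finset.card_erase_of_mem, (Finset.mem_filter.mp hp).2.2]
        · rfl
        · simp only [fRoots, Finset.mem_filter, Finset.mem_univ, true_and]
          exact (hρ p hp u).root
  have hT : T.card = (n - m) * (fB n m).card := by
    simp only [T, Finset.card_sigma]
    rw [Finset.sum_congr rfl (g := fun _ => n - m)]
    · simp [mul_comm]
    · intro q hq
      rw [Finset.card_compl, (Finset.mem_filter.mp hq).2.2, Fintype.card_fin]
  rw [← hS, ← hT]
  apply Finset.card_le_card_of_injOn
    (fun x => ⟨Function.update x.1 x.2.2 x.2.1, x.2.2⟩)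
  · rintro ⟨p, u, r⟩ hx
    simp only [S, Finset.coe_sigma, Set.mem_sigma_iff, Finset.mem_coe, Finset.mem_univ, true_and,
      Finset.mem_erase] at hx
    obtain ⟨hp, hne, hr⟩ := hx
    have hr' : p r = r := by simpa [fRoots] using hr
    have hur : u ≠ r := by
      rintro rfl
      apply hne
      have key : ∀ a b, FReach p a b → p a = a → a = b := by
        intro a b hab
        induction hab with
        | base s h => intro _; rfl
        | step v s h ih => intro h1; rw [h1] at ih; exact ih h1
      exact key _ _ (hρ p hp u) hr'
    have hroots := fRoots_update (p := p) hur
    simp only [T, Finset.coe_sigma, Set.mem_sigma_iff, Finset.mem_coe]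
    refine ⟨?_, ?_⟩
    · rw [fB, Finset.mem_filter]
      refine ⟨Finset.mem_univ _, ?_, ?_⟩
      · intro v
        by_cases hv : ρ p v = r
        · exact ⟨_, (hρ p hp v).update_eq hv hr' (hρ p hp u) (Ne.symm hne)⟩
        · exact ⟨_, (hρ p hp v).update_ne hr' hv⟩
      · rw [hroots, Finset.card_erase_of_mem hr, (Finset.mem_filter.mp hp).2.2]; rfl
    · rw [hroots]; simp
  · rintro ⟨p, u, r⟩ hx ⟨p', u', r'⟩ hx' h
    simp only [S, Finset.coe_sigma, Set.mem_sigma_iff, Finset.mem_coe, Finset.mem_univ, true_and,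
      Finset.mem_erase] at hx hx'
    obtain ⟨hp, hne, hr⟩ := hx
    obtain ⟨hp', hne', hr'⟩ := hx'
    have e1 : p r = r := by simpa [fRoots] using hr
    have e2 : p' r' = r' := by simpa [fRoots] using hr'
    simp only [Sigma.mk.injEq, heq_eq_eq] at h
    obtain ⟨h1, rfl⟩ := h
    have hu : u = u' := by
      have := congrFun h1 r
      simpa using this
    have hpp : p = p' := by
      funext x
      by_cases hx : x = r
      · rw [hx, e1, e2]
      · have := congrFun h1 x
        simpa [Function.update_of_ne hx] using this
    subst hu; subst hpp; rfl

lemma fB_lower (n : ℕ) : ∀ j, j < n →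
    n ^ j * (n - 1).descFactorial j ≤ j.factorial * (fB n (n - j)).card := by
  intro j
  induction j with
  | zero =>
    intro hj
    simp only [pow_zero, Nat.descFactorial_zero, mul_one, Nat.factorial_zero, one_mul, Nat.sub_zero]
    apply Finset.card_pos.mpr
    refine ⟨id, ?_⟩
    simp only [fB, Finset.mem_filter, Finset.mem_univ, true_and]
    exact ⟨fun v => ⟨v, FReach.base v rfl⟩, by simp [fRoots]⟩
  | succ j ih =>
    intro hj
    have h := ih (by omega)
    have hs := fB_step n (n - (j + 1))
    rw [show n - (j + 1) + 1 = n - j by omega, show n - (n - (j + 1)) = j + 1 by omega] at hs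
    rw [Nat.descFactorial_succ, Nat.factorial_succ, pow_succ,
      show n - 1 - j = n - (j + 1) by omega]
    calc n ^ j * n * ((n - (j + 1)) * (n - 1).descFactorial j)
        = n * (n - (j + 1)) * (n ^ j * (n - 1).descFactorial j) := by ring
      _ ≤ n * (n - (j + 1)) * (j.factorial * (fB n (n - j)).card) := by gcongr
      _ = j.factorial * (n * (n - (j + 1)) * (fB n (n - j)).card) := by ring
      _ ≤ j.factorial * ((j + 1) * (fB n (n - (j + 1))).card) := by gcongr
      _ = _ := by ring

lemma fB_one (n : ℕ) (hn : 0 < n) : n ^ (n - 1) ≤ (fB n 1).card := by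
  have h := fB_lower n (n - 1) (by omega)
  rw [Nat.descFactorial_self, show n - (n - 1) = 1 by omega, mul_comm] at h
  exact Nat.le_of_mul_le_mul_left h (Nat.factorial_pos _)

/-- The graph of a parent map. -/
def fGraph {n : ℕ} (p : Fin n → Fin n) : SimpleGraph (Fin n) :=
  SimpleGraph.fromRel (fun u v => p u = v)

lemma fGraph_reachable {n : ℕ} {p : Fin n → Fin n} {v s : Fin n} (h : FReach p v s) :
    (fGraph p).Reachable v s := by
  induction h with
  | base s h => exact SimpleGraph.Reachable.refl _
  | step v s h ih =>
    by_cases hv : p v = v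
    · rwa [hv] at ih
    · refine SimpleGraph.Reachable.trans (SimpleGraph.Adj.reachable ?_) ih
      simp only [fGraph, SimpleGraph.fromRel_adj]
      exact ⟨Ne.symm hv, Or.inl trivial⟩

lemma fB_unique {n : ℕ} {p : Fin n → Fin n} (hp : p ∈ fB n 1) :
    ∃ r, fRoots p = {r} ∧ ∀ v, FReach p v r := by
  classical
  obtain ⟨-, h1, h2⟩ := Finset.mem_filter.mp hp
  obtain ⟨r, hr⟩ := Finset.card_eq_one.mp h2
  refine ⟨r, hr, fun v => ?_⟩
  obtain ⟨s, hs⟩ := h1 v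
  have : s ∈ fRoots p := by simp [fRoots, hs.root]
  rw [hr, Finset.mem_singleton] at this
  exact this ▸ hs

lemma fGraph_acyclic {n : ℕ} {p : Fin n → Fin n} (hp : p ∈ fB n 1) : (fGraph p).IsAcyclic := by
  classical
  obtain ⟨r, hr, hv⟩ := fB_unique hp
  have hconn : (fGraph p).Connected := by
    haveI : Nonempty (Fin n) := ⟨r⟩
    exact ⟨fun a b => (fGraph_reachable (hv a)).trans (fGraph_reachable (hv b)).symm⟩
  have hle := hconn.card_vert_le_card_edgeSet_add_one
  have hsub : (fGraph p).edgeSet ⊆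
      ((Finset.univ.erase r).image (fun v => s(v, p v)) : Finset (Sym2 (Fin n))) := by
    have hmem : ∀ x, p x ≠ x → x ≠ r := by
      rintro x hx rfl
      exact hx (hv x).root
    intro e
    induction e with
    | h a b =>
      intro hab
      simp only [SimpleGraph.mem_edgeSet, fGraph, SimpleGraph.fromRel_adj] at hab
      simp only [Finset.coe_image, Set.mem_image, Finset.mem_coe, Finset.mem_erase,
        Finset.mem_univ, and_true]
      obtain ⟨hne, h | h⟩ := hab
      · exact ⟨a, hmem a (by rw [h]; exact hne.symm), by rw [h]⟩
      · exact ⟨b, hmem b (by rw [h]; exact hne), by rw [h, Sym2.eq_swap]⟩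
  have hcard : Nat.card (fGraph p).edgeSet ≤ n - 1 := by
    rw [Nat.card_coe_set_eq]
    refine (Set.ncard_le_ncard hsub (Finset.finite_toSet _)).trans ?_
    rw [Set.ncard_coe_finset]
    refine Finset.card_image_le.trans ?_
    simp
  have hn : 0 < n := Fin.pos r
  have : (fGraph p).IsTree := by
    rw [SimpleGraph.isTree_iff_connected_and_card]
    refine ⟨hconn, ?_⟩
    simp only [Nat.card_eq_fintype_card (α := Fin n), Fintype.card_fin] at hle ⊢
    omega
  exact this.isAcyclic

lemma fGraph_inj {n : ℕ} {p q : Fin n → Fin n} {r : Fin n} (hpr : ∀ v, FReach p v r)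
    (hqr : ∀ v, FReach q v r) (h : fGraph p = fGraph q) : p = q := by
  funext v
  have key : ∀ v s, FReach p v s → s = r → p v = q v := by
    intro v s hv
    induction hv with
    | base s hs =>
      rintro rfl
      rw [hs, (hqr s).root]
    | step v s hs ih =>
      intro hsr
      have ih := ih hsr
      by_cases hvp : p v = v
      · rwa [hvp] at ih
      · have hadj : (fGraph p).Adj v (p v) := by
          simp only [fGraph, SimpleGraph.fromRel_adj]
          exact ⟨Ne.symm hvp, Or.inl trivial⟩
        rw [h] at hadj
        simp only [fGraph, SimpleGraph.fromRel_adj] at hadj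
        obtain ⟨-, h1 | h1⟩ := hadj
        · exact h1.symm
        · exact absurd ((hpr v).no_two_cycle (ih.trans h1)) hvp
  exact key v r (hpr v) rfl

lemma forest_lower (n : ℕ) (hn : 0 < n) :
    n ^ (n - 1) ≤ n * Nat.card {G : SimpleGraph (Fin n) // G.IsAcyclic} := by
  classical
  refine (fB_one n hn).trans ?_
  have hr : ∀ p : fB n 1, ∃ r, ∀ v, FReach p.1 v r := fun p =>
    let ⟨r, _, h⟩ := fB_unique p.2
    ⟨r, h⟩
  choose ρ hρ using hr
  let F : fB n 1 → Fin n × {G : SimpleGraph (Fin n) // G.IsAcyclic} :=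
    fun p => (ρ p, ⟨fGraph p.1, fGraph_acyclic p.2⟩)
  have hF : Function.Injective F := by
    intro p q hpq
    simp only [F, Prod.mk.injEq, Subtype.mk.injEq] at hpq
    apply Subtype.ext
    exact fGraph_inj (hρ p) (by rw [hpq.1]; exact hρ q) hpq.2
  have := Nat.card_le_card_of_injective F hF
  rw [Nat.card_prod] at this
  simpa using this

lemma forest_eq_fGraph {n : ℕ} (G : SimpleGraph (Fin n)) (hG : G.IsAcyclic) :
    ∃ p, fGraph p = G := by
  classical
  have hroot : ∀ v, ∃ w : G.Walk v (Quot.out (G.connectedComponentMk v)), w.IsPath := by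
    intro v
    have : G.Reachable v (Quot.out (G.connectedComponentMk v)) :=
      (SimpleGraph.ConnectedComponent.exact (Quot.out_eq (G.connectedComponentMk v))).symm
    exact this.exists_isPath
  choose w hw using hroot
  refine ⟨fun v => (w v).snd, ?_⟩
  have hsnd : ∀ v, (w v).snd ≠ v → G.Adj v (w v).snd := by
    intro v hv
    apply SimpleGraph.Walk.adj_snd
    intro hnil
    apply hv
    rw [SimpleGraph.Walk.snd, SimpleGraph.Walk.getVert_of_length_le]
    · exact hnil.eq.symm
    · rw [SimpleGraph.Walk.nil_iff_length_eq.mp hnil]; omega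
  ext a b
  simp only [fGraph, SimpleGraph.fromRel_adj]
  constructor
  · rintro ⟨hne, h | h⟩
    · subst h; exact hsnd a hne.symm
    · subst h; exact (hsnd b hne).symm
  · intro hab
    refine ⟨hab.ne, ?_⟩
    by_cases hb : b ∈ (w a).support
    · left
      exact (hG.eq_snd_of_adj_start (hw a) hab hb).symm
    · right
      have hc : G.connectedComponentMk a = G.connectedComponentMk b :=
        SimpleGraph.ConnectedComponent.sound hab.reachable
      have hpath : (SimpleGraph.Walk.cons hab.symm (w a)).IsPath := (hw a).cons hb
      have : ∀ (t : Fin n) (q : G.Walk b t), t = Quot.out (G.connectedComponentMk b) →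
          q.IsPath → (w b).snd = q.snd := by
        rintro t q rfl hq
        have := hG.path_unique ⟨w b, hw b⟩ ⟨q, hq⟩
        have := congrArg Subtype.val this
        simp only at this
        rw [this]
      rw [this _ _ (by rw [hc]) hpath]
      simp

lemma forest_upper (n : ℕ) : Nat.card {G : SimpleGraph (Fin n) // G.IsAcyclic} ≤ n ^ n := by
  have hex : ∀ G : {G : SimpleGraph (Fin n) // G.IsAcyclic}, ∃ p, fGraph p = G.1 :=
    fun G => forest_eq_fGraph G.1 G.2
  choose F hF using hex
  have hinj : Function.Injective F := by
    intro G H h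
    apply Subtype.ext
    rw [← hF G, ← hF H, h]
  have := Nat.card_le_card_of_injective F hinj
  simpa using this

lemma forest_up_bound (n : ℕ) (hn : 0 < n) :
    ((Nat.card {G : SimpleGraph (Fin n) // G.IsAcyclic} : ℝ) /
            (n.factorial : ℝ)) ^ ((n : ℝ)⁻¹) ≤ Real.exp 1 := by
  have h1 : ((Nat.card {G : SimpleGraph (Fin n) // G.IsAcyclic} : ℝ) /
            (n.factorial : ℝ)) ≤ Real.exp 1 ^ n := by
    calc _ ≤ (n : ℝ) ^ n / n.factorial := by
          gcongr; exact_mod_cast forest_upper n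
      _ ≤ Real.exp n := Real.pow_div_factorial_le_exp _ (by positivity) _
      _ = _ := by rw [← Real.exp_nat_mul]; simp
  calc _ ≤ (Real.exp 1 ^ n) ^ ((n : ℝ)⁻¹) := by gcongr
    _ = _ := Real.pow_rpow_inv_natCast (Real.exp_pos 1).le hn.ne'

lemma forest_low_bound : ∀ᶠ n : ℕ in atTop, Real.exp 1 / ((4 : ℝ) ^ ((n : ℝ)⁻¹) * ((n : ℝ) ^ ((n : ℝ)⁻¹)) ^ 3) ≤
    ((Nat.card {G : SimpleGraph (Fin n) // G.IsAcyclic} : ℝ) /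
            (n.factorial : ℝ)) ^ ((n : ℝ)⁻¹) := by
  have hpi : √Real.pi < 2 := by
    rw [Real.sqrt_lt' (by norm_num)]
    linarith [Real.pi_lt_four]
  have hev := Stirling.tendsto_stirlingSeq_sqrt_pi.eventually_lt_const hpi
  filter_upwards [hev, eventually_gt_atTop 1] with n hs hn1
  have hn : 0 < n := by omega
  have hnR : (1 : ℝ) < n := by exact_mod_cast hn1
  have hfac : (n.factorial : ℝ) ≤ 4 * n * ((n : ℝ) / Real.exp 1) ^ n := by
    rw [Stirling.stirlingSeq, div_lt_iff₀ (by positivity)] at hs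
    have : √(2 * (n : ℝ)) ≤ 2 * n := by
      rw [Real.sqrt_le_left (by positivity)]
      nlinarith
    calc (n.factorial : ℝ) ≤ _ := hs.le
      _ ≤ 2 * (2 * n * ((n : ℝ) / Real.exp 1) ^ n) := by gcongr
      _ = _ := by ring
  have hlow : (n : ℝ) ^ n ≤ n ^ 2 * (Nat.card {G : SimpleGraph (Fin n) // G.IsAcyclic} : ℝ) := by
    have h := forest_lower n hn
    have h2 : n ^ n ≤ n ^ 2 * Nat.card {G : SimpleGraph (Fin n) // G.IsAcyclic} := by
      calc n ^ n = n ^ (n - 1) * n := by rw [← pow_succ, Nat.sub_add_cancel hn]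
        _ ≤ (n * Nat.card {G : SimpleGraph (Fin n) // G.IsAcyclic}) * n := by gcongr
        _ = _ := by ring
    exact_mod_cast h2
  have hmain : Real.exp 1 ^ n / (4 * (n : ℝ) ^ 3) ≤
      ((Nat.card {G : SimpleGraph (Fin n) // G.IsAcyclic} : ℝ) / (n.factorial : ℝ)) := by
    rw [div_le_div_iff₀ (by positivity) (by positivity)]
    calc Real.exp 1 ^ n * n.factorial ≤ Real.exp 1 ^ n * (4 * n * ((n : ℝ) / Real.exp 1) ^ n) := by
          gcongr
      _ = 4 * n * (n : ℝ) ^ n := by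
          rw [div_pow]; field_simp
      _ ≤ 4 * n * (n ^ 2 * (Nat.card {G : SimpleGraph (Fin n) // G.IsAcyclic} : ℝ)) := by gcongr
      _ = _ := by ring
  calc _ = (Real.exp 1 ^ n / (4 * (n : ℝ) ^ 3)) ^ ((n : ℝ)⁻¹) := by
        rw [Real.div_rpow (by positivity) (by positivity),
          Real.pow_rpow_inv_natCast (Real.exp_pos 1).le hn.ne',
          Real.mul_rpow (by positivity) (by positivity),
          ← Real.rpow_natCast, ← Real.rpow_natCast, ← Real.rpow_mul (by positivity),
          ← Real.rpow_mul (by positivity), mul_comm ((n : ℝ)⁻¹)]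
    _ ≤ _ := by gcongr

/-- The growth constant of the class of labelled forests equals `e`. -/
theorem forests_growth_constant :
    Filter.limsup
        (fun n : ℕ =>
          ((Nat.card {G : SimpleGraph (Fin n) // G.IsAcyclic} : ℝ) /
            (n.factorial : ℝ)) ^ ((n : ℝ)⁻¹))
        atTop = Real.exp 1 := by
  apply Tendsto.limsup_eq
  have h4 : Tendsto (fun n : ℕ => (4 : ℝ) ^ ((n : ℝ)⁻¹)) atTop (𝓝 1) := by
    have := Tendsto.rpow (tendsto_const_nhds (x := (4 : ℝ))) (tendsto_inv_atTop_nhds_zero_nat (𝕜 := ℝ)) (Or.inl (by norm_num))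
    simpa using this
  have hn : Tendsto (fun n : ℕ => (n : ℝ) ^ ((n : ℝ)⁻¹)) atTop (𝓝 1) := by
    have := tendsto_rpow_div.comp (tendsto_natCast_atTop_atTop (R := ℝ))
    simpa [Function.comp_def] using this
  have hlim : Tendsto (fun n : ℕ => Real.exp 1 / ((4 : ℝ) ^ ((n : ℝ)⁻¹) * ((n : ℝ) ^ ((n : ℝ)⁻¹)) ^ 3))
      atTop (𝓝 (Real.exp 1)) := by
    have := (tendsto_const_nhds (x := Real.exp 1)).div (h4.mul (hn.pow 3)) (by norm_num)
    simpa [Pi.div_def] using this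
  refine tendsto_of_tendsto_of_tendsto_of_le_of_le' hlim tendsto_const_nhds forest_low_bound ?_
  filter_upwards [eventually_gt_atTop 0] with n hn
  exact forest_up_bound n hn
end
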